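/- arXiv:1307.0028 — 3 statements merged into one kernel-verified Lean document; each statement's English description precedes it below -/
import Mathlib

section
/- The function φ_KdV belongs to N_KdV (that is, ∫ φ_KdV² dx = 2α_KdV), its energy satisfies E_KdV(φ_KdV) = c_KdV, and every φ ∈ N_KdV satisfies E_KdV(φ) ≥ c_KdV. Consequently c_KdV = inf{ E_KdV(φ) : φ ∈ N_KdV } and the infimum is attained at φ_KdV. -/
open MeasureTheory

noncomputable def sech (x : ℝ) : ℝ := 1 / Real.cosh x

/-- `H1Pair φ φ'` expresses that `φ` belongs to `H¹(ℝ)` with weak derivative `φ'`: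
`φ` is continuous and square-integrable, `φ'` is square-integrable, and
`φ b - φ a = ∫ₐᵇ φ'` for all `a ≤ b`. -/
def H1Pair (φ φ' : ℝ → ℝ) : Prop :=
  Continuous φ ∧ Integrable (fun x => (φ x) ^ 2) ∧ Integrable (fun x => (φ' x) ^ 2) ∧
    ∀ a b : ℝ, a ≤ b → φ b - φ a = ∫ t in a..b, φ' t

/-- The Korteweg–de Vries energy `E_KdV(φ) = (1/2)∫ (c φ'² + d φ³) dx`. -/
noncomputable def EKdV (c d : ℝ) (φ φ' : ℝ → ℝ) : ℝ :=
  (1 / 2) * ∫ x : ℝ, (c * (φ' x) ^ 2 + d * (φ x) ^ 3)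


lemma kdv_pointwise {c d B K p p' t t' : ℝ} (hc : 0 < c) (hd : 0 < d) (hB : 0 < B)
    (hK : K = 16 * c ^ 2 * B ^ 3 / d ^ 2) (ht : t ^ 2 < 1)
    (h : (1 - t ^ 2) * t' = p ^ 2 / K) :
    -2 * c * B * (t' * p ^ 2 + t * (2 * p * p')) - 2 * c * B ^ 2 * K * ((1 - t ^ 4) * t')
      ≤ c * p' ^ 2 + d * p ^ 3 := by
  have hKpos : 0 < K := by rw [hK]; positivity
  have hq : 0 < 1 - t ^ 2 := by linarith
  have ht' : t' = p ^ 2 / (K * (1 - t ^ 2)) := by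
    field_simp at h ⊢
    linarith
  have h1 : 0 ≤ 2 * c * B ^ 2 * (1 - t ^ 2) + 2 * c * B * t' + d * p := by
    have : 2 * c * B ^ 2 * (1 - t ^ 2) + 2 * c * B * t' + d * p
        = (4 * c * B ^ 2 * (1 - t ^ 2) + d * p) ^ 2 / (8 * c * B ^ 2 * (1 - t ^ 2)) := by
      rw [ht', hK]
      field_simp
      ring
    rw [this]; positivity
  have h2 : K * ((1 - t ^ 4) * t') = (1 + t ^ 2) * p ^ 2 := by
    have : K * ((1 - t ^ 2) * t') = p ^ 2 := by rw [h]; field_simp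
    linear_combination (1 + t ^ 2) * this
  have h3 := mul_nonneg (sq_nonneg p) h1
  have h4 := mul_nonneg hc.le (sq_nonneg (p' + 2 * B * t * p))
  have h5 : 2 * c * B ^ 2 * K * ((1 - t ^ 4) * t') = 2 * c * B ^ 2 * ((1 + t ^ 2) * p ^ 2) := by
    rw [← h2]; ring
  rw [h5]
  nlinarith

lemma kdv_tau {K M : ℝ} {φ : ℝ → ℝ} (hK : 0 < K) (hφ : Continuous φ)
    (hi : Integrable (fun x => (φ x) ^ 2)) (hM : ∫ x, (φ x) ^ 2 = M) (hMK : M < 4 / 3 * K) :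
    ∃ t t' : ℝ → ℝ, ContDiff ℝ 1 t ∧ (∀ x, HasDerivAt t (t' x) x) ∧ (∀ x, (t x) ^ 2 < 1) ∧
      ∀ x, (1 - (t x) ^ 2) * t' x = (φ x) ^ 2 / K := by
  set m : ℝ → ℝ := fun x => (∫ y in Set.Iic (0:ℝ), (φ y) ^ 2) + ∫ y in (0:ℝ)..x, (φ y) ^ 2 with hm
  have hm' : ∀ x, HasDerivAt m ((φ x) ^ 2) x := by
    intro x
    have : Continuous fun y => (φ y) ^ 2 := by fun_prop
    exact (this.integral_hasStrictDerivAt 0 x).hasDerivAt.const_add _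
  have hme : ∀ x, m x = ∫ y in Set.Iic x, (φ y) ^ 2 := by
    intro x
    have := intervalIntegral.integral_Iic_sub_Iic (a := 0) (b := x) hi.integrableOn hi.integrableOn
    simp only [hm]; linarith
  have hm0 : ∀ x, 0 ≤ m x := by
    intro x; rw [hme]; exact integral_nonneg fun y => sq_nonneg _
  have hm1 : ∀ x, m x ≤ M := by
    intro x; rw [hme, ← hM]
    exact setIntegral_le_integral hi (Filter.Eventually.of_forall fun y => sq_nonneg _)
  set w : ℝ → ℝ := fun x => 3 / 2 * ((m x - M / 2) / K) with hw
  have hw' : ∀ x, HasDerivAt w (3 / 2 * ((φ x) ^ 2 / K)) x := by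
    intro x
    exact (((hm' x).sub_const _).div_const _).const_mul _
  have hw1 : ∀ x, w x < 1 := by
    intro x
    have : (m x - M / 2) / K < 2 / 3 := by
      rw [div_lt_iff₀ hK]; linarith [hm1 x]
    simp only [hw]; linarith
  have hw2 : ∀ x, -1 < w x := by
    intro x
    have : -(2 / 3) < (m x - M / 2) / K := by
      rw [lt_div_iff₀ hK]; linarith [hm0 x]
    simp only [hw]; linarith
  have hwC : ContDiff ℝ 1 w := by
    rw [contDiff_one_iff_deriv]
    refine ⟨fun x => (hw' x).differentiableAt, ?_⟩
    have : deriv w = fun x => 3 / 2 * ((φ x) ^ 2 / K) := by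
      ext x; exact (hw' x).deriv
    rw [this]; fun_prop
  set t : ℝ → ℝ := fun x => 2 * Real.sin (Real.arcsin (w x) / 3) with ht
  have hts : ContDiff ℝ 1 t := by
    rw [contDiff_iff_contDiffAt]
    intro x
    have h1 : ContDiffAt ℝ 1 (fun x => Real.arcsin (w x)) x :=
      (Real.contDiffAt_arcsin (hw2 x).ne' (hw1 x).ne).comp x hwC.contDiffAt
    exact contDiffAt_const.mul ((h1.div_const 3).sin)
  have hteq : ∀ x, t x - (t x) ^ 3 / 3 = 2 / 3 * w x := by
    intro x
    have h3 := Real.sin_three_mul (Real.arcsin (w x) / 3)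
    rw [mul_div_cancel₀ _ (by norm_num : (3:ℝ) ≠ 0), Real.sin_arcsin (hw2 x).le (hw1 x).le] at h3
    simp only [ht]; linear_combination (-2 / 3) * h3
  have htd : ∀ x, HasDerivAt t (deriv t x) x := fun x =>
    ((hts.differentiable (by norm_num)) x).hasDerivAt
  refine ⟨t, deriv t, hts, htd, ?_, ?_⟩
  · intro x
    have hpi := Real.pi_pos
    have a1 : Real.arcsin (w x) < Real.pi / 2 := Real.arcsin_lt_pi_div_two.2 (hw1 x)
    have a2 : -(Real.pi / 2) < Real.arcsin (w x) := Real.neg_pi_div_two_lt_arcsin.2 (hw2 x)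
    have b1 : Real.sin (Real.arcsin (w x) / 3) < 1 / 2 := by
      rw [← Real.sin_pi_div_six]
      exact Real.sin_lt_sin_of_lt_of_le_pi_div_two (by linarith) (by linarith) (by linarith)
    have b2 : -(1 / 2) < Real.sin (Real.arcsin (w x) / 3) := by
      rw [← Real.sin_pi_div_six, ← Real.sin_neg]
      exact Real.sin_lt_sin_of_lt_of_le_pi_div_two (by linarith) (by linarith) (by linarith)
    simp only [ht]; nlinarith
  · intro x
    have h1 := (htd x).sub (((htd x).pow 3).div_const 3)
    have h2 := (hw' x).const_mul (2 / 3)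
    have h3 : (t - fun y => (t ^ 3) y / 3) = fun y => 2 / 3 * w y := by
      ext y; simpa using hteq y
    rw [h3] at h1
    have h4 := h1.unique h2
    norm_num at h4
    linear_combination h4

lemma kdv_local {c d B K : ℝ} {φ φ' t t' : ℝ → ℝ} (hc : 0 < c) (hd : 0 < d) (hB : 0 < B)
    (hK : K = 16 * c ^ 2 * B ^ 3 / d ^ 2)
    (hloc : LocallyIntegrable φ')
    (hφφ' : ∀ a b : ℝ, a ≤ b → φ b - φ a = ∫ t in a..b, φ' t)
    (htC : ContDiff ℝ 1 t) (htd : ∀ x, HasDerivAt t (t' x) x) (ht1 : ∀ x, (t x) ^ 2 < 1)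
    (hte : ∀ x, (1 - (t x) ^ 2) * t' x = (φ x) ^ 2 / K)
    (hint : Integrable (fun x => c * (φ' x) ^ 2 + d * (φ x) ^ 3)) (a b : ℝ) (hab : a ≤ b) :
    -2 * c * B * ((φ b) ^ 2 + (φ a) ^ 2) - 2 * c * B ^ 2 * K * (8 / 5)
      ≤ ∫ x in a..b, (c * (φ' x) ^ 2 + d * (φ x) ^ 3) := by
  have hKpos : 0 < K := by rw [hK]; positivity
  have hii : ∀ x y, IntervalIntegrable φ' volume x y := fun x y =>
    intervalIntegrable_iff.mpr <|
      (hloc.integrableOn_isCompact isCompact_uIcc).mono_set Set.uIoc_subset_uIcc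
  have hφ : φ = fun x => φ a + ∫ s in a..x, φ' s := by
    ext x
    rcases le_total a x with h | h
    · linarith [hφφ' a x h]
    · rw [intervalIntegral.integral_symm]; linarith [hφφ' x a h]
  have hφd : ∀ᵐ x, HasDerivAt φ (φ' x) x := by
    filter_upwards [LocallyIntegrable.ae_hasDerivAt_integral hloc] with x hx
    rw [hφ]
    exact (hx a).const_add _
  have hφAC : AbsolutelyContinuousOnInterval φ a b := by
    rw [hφ]
    have h1 := (hii a b).absolutelyContinuousOnInterval_intervalIntegral (c := a) (by simp)
    have h2 : AbsolutelyContinuousOnInterval (fun _ : ℝ => φ a) a b :=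
      (contDiff_const (n := 1)).contDiffOn.absolutelyContinuousOnInterval
    exact h2.fun_add h1
  have htAC : AbsolutelyContinuousOnInterval t a b :=
    htC.contDiffOn.absolutelyContinuousOnInterval
  set G : ℝ → ℝ := fun x => -2 * c * B * (t x * (φ x * φ x))
    - 2 * c * B ^ 2 * K * (t x - (t x) ^ 5 / 5) with hG
  have hGAC : AbsolutelyContinuousOnInterval G a b := by
    have h1 := (htAC.fun_mul (hφAC.fun_mul hφAC)).const_mul (-2 * c * B)
    have h2 : ContDiff ℝ 1 (fun x => 2 * c * B ^ 2 * K * (t x - (t x) ^ 5 / 5)) := by fun_prop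
    exact h1.fun_sub h2.contDiffOn.absolutelyContinuousOnInterval
  have hGle : ∀ᵐ x, deriv G x ≤ c * (φ' x) ^ 2 + d * (φ x) ^ 3 := by
    filter_upwards [hφd] with x hx
    have h1 := (((htd x).mul (hx.mul hx)).const_mul (-2 * c * B)).sub
      (((htd x).sub (((htd x).pow 5).div_const 5)).const_mul (2 * c * B ^ 2 * K))
    have h2 : deriv G x = _ := h1.deriv
    rw [h2]
    refine le_trans (le_of_eq ?_) (kdv_pointwise hc hd hB hK (ht1 x) (hte x) (p' := φ' x))
    simp only [Pi.mul_apply]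
    norm_num
    ring
  have hmain : G b - G a ≤ ∫ x in a..b, (c * (φ' x) ^ 2 + d * (φ x) ^ 3) := by
    rw [← hGAC.integral_deriv_eq_sub]
    exact intervalIntegral.integral_mono_ae hab hGAC.intervalIntegrable_deriv
      hint.intervalIntegrable hGle
  refine le_trans ?_ hmain
  have hts : ∀ x, -1 < t x ∧ t x < 1 := fun x => by
    have := ht1 x
    rw [sq_lt_one_iff_abs_lt_one, abs_lt] at this
    exact this
  have k1 : ∀ x, t x - (t x) ^ 5 / 5 ≤ 4 / 5 := fun x => by
    obtain ⟨h1, h2⟩ := hts x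
    have : 0 ≤ (1 - t x) ^ 2 * ((t x)^3 + 2 * (t x)^2 + 3 * t x + 4) := by
      have : 0 ≤ (t x)^3 + 2 * (t x)^2 + 3 * t x + 4 := by
        have := mul_nonneg (by linarith : 0 ≤ t x + 1) (sq_nonneg (t x + 1/2))
        nlinarith [mul_nonneg (by linarith : 0 ≤ t x + 1) (sq_nonneg (t x))]
      positivity
    nlinarith
  have k2 : ∀ x, -(4 / 5) ≤ t x - (t x) ^ 5 / 5 := fun x => by
    obtain ⟨h1, h2⟩ := hts x
    have : 0 ≤ (1 + t x) ^ 2 * (-(t x)^3 + 2 * (t x)^2 - 3 * t x + 4) := by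
      have : 0 ≤ -(t x)^3 + 2 * (t x)^2 - 3 * t x + 4 := by
        nlinarith [mul_nonneg (by linarith : 0 ≤ 1 - t x) (sq_nonneg (t x))]
      positivity
    nlinarith
  have k3 : t b * (φ b * φ b) ≤ (φ b) ^ 2 := by
    nlinarith [mul_nonneg (sq_nonneg (φ b)) (by linarith [(hts b).2] : 0 ≤ 1 - t b)]
  have k4 : - (φ a) ^ 2 ≤ t a * (φ a * φ a) := by
    nlinarith [mul_nonneg (sq_nonneg (φ a)) (by linarith [(hts a).1] : 0 ≤ 1 + t a)]
  have hcB : 0 < 2 * c * B := by positivity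
  have hcK : 0 < 2 * c * B ^ 2 * K := by positivity
  have e1 := mul_le_mul_of_nonneg_left
    (by linarith : t b * (φ b * φ b) - t a * (φ a * φ a) ≤ (φ b) ^ 2 + (φ a) ^ 2) hcB.le
  have e2 := mul_le_mul_of_nonneg_left
    (by linarith [k1 b, k2 a] : (t b - t b ^ 5 / 5) - (t a - t a ^ 5 / 5) ≤ 8 / 5) hcK.le
  simp only [hG]
  linarith

lemma kdv_small {h : ℝ → ℝ} (hi : Integrable h) {ε : ℝ} (hε : 0 < ε) :
    ∃ᶠ x in Filter.atTop, h x < ε := by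
  intro hcon
  obtain ⟨N, hN⟩ := Filter.eventually_atTop.1 hcon
  have h1 : IntegrableOn (fun _ : ℝ => ε) (Set.Ioi N) := by
    refine Integrable.mono' (hi.integrableOn (s := Set.Ioi N)) (by fun_prop) ?_
    refine (ae_restrict_mem measurableSet_Ioi).mono fun x hx => ?_
    have := hN x (le_of_lt hx)
    rw [Real.norm_of_nonneg hε.le]; linarith
  rw [integrableOn_const_iff] at h1
  simp [hε.ne'] at h1

lemma kdv_lower {c d B K M : ℝ} {φ φ' : ℝ → ℝ} (hc : 0 < c) (hd : 0 < d) (hB : 0 < B)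
    (hK : K = 16 * c ^ 2 * B ^ 3 / d ^ 2) (hM0 : 0 < M) (hMK : M < 4 / 3 * K)
    (hH : H1Pair φ φ') (hM : ∫ x, (φ x) ^ 2 = M) :
    -(8 / 5) * c * B ^ 2 * K ≤ EKdV c d φ φ' := by
  have hKpos : 0 < K := by rw [hK]; positivity
  obtain ⟨hcont, hi, hi', hφφ'⟩ := hH
  have hloc : LocallyIntegrable φ' := by
    by_contra hcon
    simp only [LocallyIntegrable, not_forall] at hcon
    obtain ⟨p, hp⟩ := hcon
    have key : ∀ a b, a < p → p < b → φ b = φ a := by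
      intro a b ha hb
      have h1 := hφφ' a b (by linarith)
      rw [intervalIntegral.integral_undef] at h1
      · linarith
      · intro h2
        rw [intervalIntegrable_iff_integrableOn_Ioc_of_le (by linarith)] at h2
        exact hp ⟨Set.Ioc a b, Ioc_mem_nhds ha hb, h2⟩
    have h0 : (fun x => (φ x) ^ 2) =ᵐ[volume] fun _ => (φ (p + 1)) ^ 2 := by
      have : ∀ᵐ x : ℝ, x ≠ p := by simp [ae_iff, measure_singleton]
      filter_upwards [this] with x hx
      rcases lt_or_gt_of_ne hx with h | h
      · rw [key x (p + 1) h (by linarith)]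
      · rw [key (p - 1) x (by linarith) h, key (p - 1) (p + 1) (by linarith) (by linarith)]
    have h1 := hi.congr h0
    rw [integrable_const_iff] at h1
    have h2 : (φ (p + 1)) ^ 2 = 0 := by
      rcases h1 with h | h
      · exact h
      · have := h.measure_univ_lt_top; simp at this
    rw [integral_congr_ae h0, h2] at hM
    simp at hM
    linarith
  obtain ⟨t, t', htC, htd, ht1, hte⟩ := kdv_tau hKpos hcont hi hM hMK
  by_cases hint : Integrable (fun x => c * (φ' x) ^ 2 + d * (φ x) ^ 3)
  swap
  · rw [EKdV, integral_undef hint, mul_zero]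
    have : 0 < (8 / 5) * c * B ^ 2 * K := by positivity
    linarith
  have hb : ∀ b : ℝ, 0 ≤ b → _ := fun b hb0 =>
    kdv_local hc hd hB hK hloc hφφ' htC htd ht1 hte hint (-b) b (by linarith)
  have hlim := intervalIntegral_tendsto_integral hint Filter.tendsto_neg_atTop_atBot
    Filter.tendsto_id
  have hsm : Integrable (fun x => (φ x) ^ 2 + (φ (-x)) ^ 2) := hi.add hi.comp_neg
  rw [EKdV]
  set I := ∫ x, (c * (φ' x) ^ 2 + d * (φ x) ^ 3)
  suffices h : -2 * c * B ^ 2 * K * (8 / 5) ≤ I by linarith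
  refine le_of_forall_pos_le_add fun ε hε => ?_
  have hcB : 0 < 2 * c * B := by positivity
  have hf := kdv_small hsm (ε := ε / 2 / (2 * c * B)) (by positivity)
  have he : ∀ᶠ b : ℝ in Filter.atTop, (∫ x in (-b)..(id b), (c * (φ' x) ^ 2 + d * (φ x) ^ 3)) < I + ε / 2 :=
    hlim.eventually_lt_const (by linarith)
  obtain ⟨b, h1, h2, h3⟩ := (hf.and_eventually (he.and (Filter.eventually_ge_atTop 0))).exists
  have h4 := hb b h3
  rw [lt_div_iff₀ hcB] at h1
  simp only [id] at h2
  nlinarith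

lemma kdv_sech_sq (x : ℝ) : sech x ^ 2 = 1 - Real.tanh x ^ 2 := by
  have := Real.cosh_pos x
  rw [sech, Real.tanh_eq_sinh_div_cosh]
  have h := Real.cosh_sq x
  field_simp
  linarith

lemma kdv_tanh_bound (x : ℝ) : 1 - Real.tanh x ^ 2 ≤ (1 + x ^ 2)⁻¹ := by
  rw [← kdv_sech_sq, sech, div_pow, one_pow, one_div]
  have h := Real.cosh_sq x
  have h2 : x ^ 2 ≤ Real.sinh x ^ 2 := by
    rcases le_total 0 x with hx | hx
    · have := Real.self_le_sinh_iff.2 hx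
      nlinarith
    · have := Real.sinh_le_self_iff.2 hx
      nlinarith
  apply inv_anti₀ (by positivity) (by linarith)

lemma kdv_tanh_deriv (x : ℝ) : HasDerivAt Real.tanh (1 - Real.tanh x ^ 2) x := by
  have h := (Real.hasDerivAt_sinh x).div (Real.hasDerivAt_cosh x) (Real.cosh_pos x).ne'
  have h2 : (Real.sinh / Real.cosh) = Real.tanh := by
    ext y; simp [Real.tanh_eq_sinh_div_cosh]
  rw [h2] at h
  refine h.congr_deriv ?_
  have := Real.cosh_pos x
  rw [Real.tanh_eq_sinh_div_cosh]; field_simp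

lemma kdv_tanh_top : Filter.Tendsto Real.tanh Filter.atTop (nhds 1) := by
  have h1 : Filter.Tendsto (fun x : ℝ => 1 - (1 + x ^ 2)⁻¹) Filter.atTop (nhds 1) := by
    have : Filter.Tendsto (fun x : ℝ => (1 + x ^ 2)⁻¹) Filter.atTop (nhds 0) :=
      (Filter.tendsto_atTop_add_const_left _ _ (Filter.tendsto_pow_atTop two_ne_zero)).inv_tendsto_atTop
    simpa using this.const_sub 1
  refine tendsto_of_tendsto_of_tendsto_of_le_of_le' h1 tendsto_const_nhds ?_ ?_
  · filter_upwards [Filter.eventually_ge_atTop 0] with x hx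
    have h2 := kdv_tanh_bound x
    have h3 := Real.tanh_lt_one x
    have h4 : 0 ≤ Real.tanh x := by
      rw [Real.tanh_eq_sinh_div_cosh]
      exact div_nonneg (Real.sinh_nonneg_iff.2 hx) (Real.cosh_pos x).le
    nlinarith
  · exact Filter.Eventually.of_forall fun x => (Real.tanh_lt_one x).le

lemma kdv_tanh_bot : Filter.Tendsto Real.tanh Filter.atBot (nhds (-1)) := by
  have h := (kdv_tanh_top.comp Filter.tendsto_neg_atBot_atTop).neg
  refine h.congr fun x => ?_
  simp

lemma kdv_tanh_cont : Continuous Real.tanh :=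
  continuous_iff_continuousAt.2 fun x => (kdv_tanh_deriv x).continuousAt

lemma kdv_tanh_int {B : ℝ} (hB : 0 < B) {Q q : ℝ → ℝ} (hQ : ∀ t, HasDerivAt Q (q t) t)
    (hq : Continuous q) :
    Integrable (fun x => q (Real.tanh (B * x)) * (B * (1 - Real.tanh (B * x) ^ 2))) ∧
    ∫ x, q (Real.tanh (B * x)) * (B * (1 - Real.tanh (B * x) ^ 2)) = Q 1 - Q (-1) := by
  have hTc : Continuous fun x : ℝ => Real.tanh (B * x) := kdv_tanh_cont.comp (by fun_prop)
  have hQc : Continuous Q := continuous_iff_continuousAt.2 fun x => (hQ x).continuousAt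
  have hint : Integrable (fun x => q (Real.tanh (B * x)) * (B * (1 - Real.tanh (B * x) ^ 2))) := by
    obtain ⟨C, hC⟩ := (isCompact_Icc (a := (-1:ℝ)) (b := 1)).exists_bound_of_continuousOn
      hq.continuousOn
    have h1 : Integrable (fun x : ℝ => (1 + (B * x) ^ 2)⁻¹) :=
      integrable_inv_one_add_sq.comp_mul_left' hB.ne'
    refine Integrable.mono' (h1.const_mul (C * B)) (Continuous.aestronglyMeasurable (by fun_prop)) ?_
    refine Filter.Eventually.of_forall fun x => ?_
    have h2 := hC (Real.tanh (B * x)) ⟨(Real.neg_one_lt_tanh _).le, (Real.tanh_lt_one _).le⟩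
    have h3 := kdv_tanh_bound (B * x)
    have h4 := Real.tanh_sq_lt_one (B * x)
    have h5 : 0 ≤ B * (1 - Real.tanh (B * x) ^ 2) := mul_nonneg hB.le (by linarith)
    rw [norm_mul, Real.norm_of_nonneg h5, mul_assoc]
    exact mul_le_mul h2 (mul_le_mul_of_nonneg_left h3 hB.le) h5 ((norm_nonneg _).trans h2)
  refine ⟨hint, ?_⟩
  refine integral_of_hasDerivAt_of_tendsto (f := fun x => Q (Real.tanh (B * x))) (fun x => ?_) hint
    ?_ ?_
  · have h1 : HasDerivAt (fun x => B * x) B x := by simpa using (hasDerivAt_id x).const_mul B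
    have h2 := (kdv_tanh_deriv (B * x)).comp x h1
    have h3 := (hQ (Real.tanh (B * x))).comp x h2
    exact h3.congr_deriv (by ring)
  · exact (hQc.tendsto _).comp (kdv_tanh_bot.comp (Filter.tendsto_id.const_mul_atBot hB))
  · exact (hQc.tendsto _).comp (kdv_tanh_top.comp (Filter.tendsto_id.const_mul_atTop hB))

lemma kdv_core {c d B K A : ℝ} (hc : 0 < c) (hd : 0 < d) (hB : 0 < B)
    (hK : K = 16 * c ^ 2 * B ^ 3 / d ^ 2) (hA : A = 4 * c * B ^ 2 / d) {φK : ℝ → ℝ}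
    (hφ : ∀ x, φK x = -A * (1 - Real.tanh (B * x) ^ 2)) :
    H1Pair φK (deriv φK) ∧ (∫ x : ℝ, (φK x) ^ 2) = 4 / 3 * K ∧
      EKdV c d φK (deriv φK) = -(8 / 5) * c * B ^ 2 * K ∧
      ∀ φ φ' : ℝ → ℝ, H1Pair φ φ' → (∫ x : ℝ, (φ x) ^ 2) = 4 / 3 * K →
        -(8 / 5) * c * B ^ 2 * K ≤ EKdV c d φ φ' := by
  have hKpos : 0 < K := by rw [hK]; positivity
  have hTc : Continuous fun x : ℝ => Real.tanh (B * x) := kdv_tanh_cont.comp (by fun_prop)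
  have hφe : φK = fun x => -A * (1 - Real.tanh (B * x) ^ 2) := funext hφ
  have hder : ∀ x, HasDerivAt φK
      (2 * A * B * Real.tanh (B * x) * (1 - Real.tanh (B * x) ^ 2)) x := by
    intro x
    have h1 : HasDerivAt (fun x => B * x) B x := by simpa using (hasDerivAt_id x).const_mul B
    have h2 := (kdv_tanh_deriv (B * x)).comp x h1
    have h3 := ((h2.pow 2).const_sub 1).const_mul (-A)
    rw [hφe]
    refine h3.congr_deriv ?_
    simp
    ring
  have hdf : deriv φK = fun x => 2 * A * B * Real.tanh (B * x) * (1 - Real.tanh (B * x) ^ 2) :=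
    funext fun x => (hder x).deriv
  have hcd : Continuous (deriv φK) := by rw [hdf]; fun_prop
  have hcφ : Continuous φK := by rw [hφe]; fun_prop
  -- mass
  have i1 := kdv_tanh_int hB (Q := fun t => A ^ 2 / B * (t - t ^ 3 / 3))
    (q := fun t => A ^ 2 / B * (1 - t ^ 2)) (fun t => by
      have := (((hasDerivAt_id t).sub (((hasDerivAt_id t).pow 3).div_const 3)).const_mul (A ^ 2 / B))
      refine this.congr_deriv ?_
      simp) (by fun_prop)
  have e1 : (fun x => A ^ 2 / B * (1 - Real.tanh (B * x) ^ 2) *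
      (B * (1 - Real.tanh (B * x) ^ 2))) = fun x => (φK x) ^ 2 := by
    ext x; rw [hφ]; field_simp
  rw [e1] at i1
  -- kinetic
  have i2 := kdv_tanh_int hB (Q := fun t => 4 * A ^ 2 * B * (t ^ 3 / 3 - t ^ 5 / 5))
    (q := fun t => 4 * A ^ 2 * B * (t ^ 2 - t ^ 4)) (fun t => by
      have := (((((hasDerivAt_id t).pow 3).div_const 3).sub
        (((hasDerivAt_id t).pow 5).div_const 5)).const_mul (4 * A ^ 2 * B))
      refine this.congr_deriv ?_
      simp) (by fun_prop)
  have e2 : (fun x => 4 * A ^ 2 * B * (Real.tanh (B * x) ^ 2 - Real.tanh (B * x) ^ 4) *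
      (B * (1 - Real.tanh (B * x) ^ 2))) = fun x => (deriv φK x) ^ 2 := by
    ext x; rw [hdf]; ring
  rw [e2] at i2
  -- potential
  have i3 := kdv_tanh_int hB (Q := fun t => -A ^ 3 / B * (t - 2 * (t ^ 3 / 3) + t ^ 5 / 5))
    (q := fun t => -A ^ 3 / B * (1 - t ^ 2) ^ 2) (fun t => by
      have := ((((hasDerivAt_id t).sub ((((hasDerivAt_id t).pow 3).div_const 3).const_mul 2)).add
        (((hasDerivAt_id t).pow 5).div_const 5)).const_mul (-A ^ 3 / B))
      refine this.congr_deriv ?_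
      simp
      left
      ring) (by fun_prop)
  have e3 : (fun x => -A ^ 3 / B * (1 - Real.tanh (B * x) ^ 2) ^ 2 *
      (B * (1 - Real.tanh (B * x) ^ 2))) = fun x => (φK x) ^ 3 := by
    ext x; rw [hφ]; field_simp
  rw [e3] at i3
  refine ⟨⟨hcφ, i1.1, i2.1, ?_⟩, ?_, ?_, ?_⟩
  · intro a b _
    rw [intervalIntegral.integral_eq_sub_of_hasDerivAt
      (fun x _ => (hder x).differentiableAt.hasDerivAt) (hcd.intervalIntegrable _ _)]
  · rw [i1.2, hA, hK]; field_simp; ring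
  · rw [EKdV, integral_add (i2.1.const_mul c) (i3.1.const_mul d), integral_const_mul,
      integral_const_mul, i2.2, i3.2, hA, hK]
    field_simp
    ring
  · intro φ φ' hH hM
    have key : ∀ b, B < b → -(8 / 5) * c * b ^ 2 * (16 * c ^ 2 * b ^ 3 / d ^ 2) ≤ EKdV c d φ φ' := by
      intro b hb
      refine kdv_lower hc hd (hB.trans hb) rfl (by positivity) ?_ hH hM
      rw [hK]
      gcongr
    have hcont : Continuous fun b : ℝ => -(8 / 5) * c * b ^ 2 * (16 * c ^ 2 * b ^ 3 / d ^ 2) := by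
      fun_prop
    have hl := (hcont.tendsto B).mono_left (nhdsWithin_le_nhds (s := Set.Ioi B))
    have := le_of_tendsto hl (Filter.eventually_of_mem self_mem_nhdsWithin key)
    rw [hK]; exact this

lemma kdv_rpow {x y : ℝ} (hx : 0 < x) (p : ℝ) (n : ℕ) (h : y = x ^ (p * n)) :
    y = (x ^ p) ^ n := by
  rw [h, Real.rpow_mul hx.le, Real.rpow_natCast]

theorem stmt2 (ν₀ ω β : ℝ) (hν₀ : 0 < ν₀) (hβ : ν₀ ^ 2 / 3 < β)
    (c d αK cK : ℝ) (hc : c = β - ν₀ ^ 2 / 3) (hd : d = ω ^ 2 / 3 + 1)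
    (hα : αK = 2 * (ω ^ 2 + 4) ^ (-(1 : ℝ) / 2))
    (hcK : cK = -(9 / 5) * (2 / 3 : ℝ) ^ ((1 : ℝ) / 3) * d ^ ((4 : ℝ) / 3) /
      (c ^ ((1 : ℝ) / 3) * (ω ^ 2 + 4) ^ ((5 : ℝ) / 6)))
    (φK : ℝ → ℝ)
    (hφK : ∀ x, φK x = -Real.sqrt 3 * (3 / 16 : ℝ) ^ ((1 : ℝ) / 6) * d ^ ((1 : ℝ) / 3) /
      (c ^ ((1 : ℝ) / 3) * (ω ^ 2 + 4) ^ ((1 : ℝ) / 3)) *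
      sech ((3 / 16 : ℝ) ^ ((1 : ℝ) / 3) * d ^ ((2 : ℝ) / 3) * x /
        (c ^ ((2 : ℝ) / 3) * (ω ^ 2 + 4) ^ ((1 : ℝ) / 6))) ^ 2) :
    H1Pair φK (deriv φK) ∧ (∫ x : ℝ, (φK x) ^ 2) = 2 * αK ∧
      EKdV c d φK (deriv φK) = cK ∧
      ∀ φ φ' : ℝ → ℝ, H1Pair φ φ' → (∫ x : ℝ, (φ x) ^ 2) = 2 * αK →
        cK ≤ EKdV c d φ φ' := by
  have hcp : 0 < c := by rw [hc]; linarith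
  have hdp : 0 < d := by rw [hd]; positivity
  set s : ℝ := ω ^ 2 + 4 with hs
  have hsp : 0 < s := by rw [hs]; positivity
  obtain ⟨x, hx⟩ : ∃ x, x = c ^ ((1 : ℝ) / 3) := ⟨_, rfl⟩
  obtain ⟨y, hy⟩ : ∃ y, y = d ^ ((1 : ℝ) / 3) := ⟨_, rfl⟩
  obtain ⟨z, hz⟩ : ∃ z, z = s ^ ((1 : ℝ) / 6) := ⟨_, rfl⟩
  obtain ⟨r, hr⟩ : ∃ r, r = (3 / 16 : ℝ) ^ ((1 : ℝ) / 6) := ⟨_, rfl⟩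
  have hxp : 0 < x := by rw [hx]; positivity
  have hyp : 0 < y := by rw [hy]; positivity
  have hzp : 0 < z := by rw [hz]; positivity
  have hrp : 0 < r := by rw [hr]; positivity
  have c2 : c ^ ((2 : ℝ) / 3) = x ^ 2 := by
    rw [hx]; exact kdv_rpow hcp _ _ (by norm_num)
  have c3 : c = x ^ 3 := by
    rw [hx]; exact kdv_rpow hcp _ _ (by norm_num)
  have d2 : d ^ ((2 : ℝ) / 3) = y ^ 2 := by
    rw [hy]; exact kdv_rpow hdp _ _ (by norm_num)
  have d4 : d ^ ((4 : ℝ) / 3) = y ^ 4 := by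
    rw [hy]; exact kdv_rpow hdp _ _ (by norm_num)
  have d3 : d = y ^ 3 := by
    rw [hy]; exact kdv_rpow hdp _ _ (by norm_num)
  have s2 : s ^ ((1 : ℝ) / 3) = z ^ 2 := by
    rw [hz]; exact kdv_rpow hsp _ _ (by norm_num)
  have s5 : s ^ ((5 : ℝ) / 6) = z ^ 5 := by
    rw [hz]; exact kdv_rpow hsp _ _ (by norm_num)
  have s3 : s ^ (-(1 : ℝ) / 2) = (z ^ 3)⁻¹ := by
    rw [neg_div, Real.rpow_neg hsp.le]
    congr 1
    rw [hz]; exact kdv_rpow hsp _ _ (by norm_num)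
  have r2 : (3 / 16 : ℝ) ^ ((1 : ℝ) / 3) = r ^ 2 := by
    rw [hr]; exact kdv_rpow (by norm_num) _ _ (by norm_num)
  have r6 : (3 / 16 : ℝ) = r ^ 6 := by
    rw [hr]; exact kdv_rpow (by norm_num) _ _ (by norm_num)
  have q3 : Real.sqrt 3 = 4 * r ^ 3 := by
    rw [Real.sqrt_eq_iff_mul_self_eq (by norm_num) (by positivity)]
    linear_combination 16 * r6
  have t3 : (2 / 3 : ℝ) ^ ((1 : ℝ) / 3) = 8 / 3 * r ^ 4 := by
    have h1 : (2 / 3 : ℝ) = (8 / 3 * r ^ 4) ^ 3 := by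
      have : (8 / 3 * r ^ 4) ^ 3 = 512 / 27 * (r ^ 6) ^ 2 := by ring
      rw [this, ← r6]; norm_num
    rw [h1, ← Real.rpow_natCast, ← Real.rpow_mul (by positivity)]
    norm_num
  have hBp : 0 < r ^ 2 * y ^ 2 / (x ^ 2 * z) := by positivity
  have hcore := kdv_core hcp hdp hBp (K := 3 / z ^ 3) (A := 4 * r ^ 4 * y / (x * z ^ 2)) (φK := φK)
    (by
      rw [c3, d3]; field_simp
      linear_combination 16 * r6)
    (by rw [c3, d3]; field_simp)
    (fun v => by
      rw [hφK v, q3, ← hr, ← hy, ← hx, s2, r2, d2, c2, ← hz, kdv_sech_sq]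
      have e1 : r ^ 2 * y ^ 2 * v / (x ^ 2 * z) = r ^ 2 * y ^ 2 / (x ^ 2 * z) * v := by ring
      rw [e1]
      ring)
  have e1 : 4 / 3 * (3 / z ^ 3) = 2 * αK := by
    rw [hα, s3]; field_simp; norm_num
  have e2 : -(8 / 5) * c * (r ^ 2 * y ^ 2 / (x ^ 2 * z)) ^ 2 * (3 / z ^ 3) = cK := by
    rw [hcK, t3, d4, ← hx, s5, c3]; field_simp; norm_num
  rw [e1, e2] at hcore
  exact hcore
end

section
/- Suppose {φ_m} ⊂ N_KdV is a minimising sequence for E_KdV, i.e. E_KdV(φ_m) → c_KdV as m → ∞. Then there exist a sequence {x_m} of real numbers, a strictly increasing sequence of indices m_j, and y ∈ ℝ such that φ_{m_j}(· + x_{m_j}) converges to φ_KdV(· + y) in H¹(ℝ), that is, ∫ |φ_{m_j}(x + x_{m_j}) − φ_KdV(x + y)|² dx + ∫ |φ′_{m_j}(x + x_{m_j}) − φ_KdV′(x + y)|² dx → 0 as j → ∞. -/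
open MeasureTheory Filter

open Topology Set

structure Good (u v : ℝ → ℝ) : Prop where
  cont : Continuous u
  mu : MemLp u 2
  mv : MemLp v 2
  ftc : ∀ a b : ℝ, u b - u a = ∫ t in a..b, v t

lemma H1Pair.locInt {φ φ' : ℝ → ℝ} (h : H1Pair φ φ') (hne : ∫ x, (φ x) ^ 2 ≠ 0) :
    LocallyIntegrable φ' := by
  obtain ⟨hc, h1, h2, h3⟩ := h
  by_contra hcon
  simp only [LocallyIntegrable, not_forall] at hcon
  obtain ⟨p, hp⟩ := hcon
  have key : ∀ a b, a < p → p < b → φ b = φ a := by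
    intro a b ha hb
    have := h3 a b (ha.le.trans hb.le)
    rw [intervalIntegral.integral_undef] at this
    · linarith
    · intro hI
      apply hp
      rw [intervalIntegrable_iff_integrableOn_Ioc_of_le (ha.le.trans hb.le)] at hI
      exact ⟨_, Ioc_mem_nhds ha hb, hI⟩
  have hall : ∀ x, x ≠ p → φ x = φ (p+1) := by
    intro x hx
    rcases lt_or_gt_of_ne hx with hx | hx
    · exact (key x (p+1) hx (by linarith)).symm
    · rw [key (p-1) x (by linarith) hx, key (p-1) (p+1) (by linarith) (by linarith)]
  have hae : (fun x => (φ x)^2) =ᵐ[volume] fun _ => (φ (p+1))^2 := by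
    have : ∀ᵐ x : ℝ, x ≠ p := by simp [ae_iff, measure_singleton]
    filter_upwards [this] with x hx
    rw [hall x hx]
  have hi := h1.congr hae
  rw [integrable_const_iff] at hi
  rcases hi with hi | hi
  · apply hne
    rw [integral_congr_ae hae, hi]; simp
  · have := hi.measure_univ_lt_top
    simp at this

lemma H1Pair.good {φ φ' : ℝ → ℝ} (h : H1Pair φ φ') (hne : ∫ x, (φ x) ^ 2 ≠ 0) (x₀ : ℝ) :
    Good (fun t => - φ (t + x₀)) (fun t => - φ' (t + x₀)) := by
  have hl := h.locInt hne
  obtain ⟨hc, h1, h2, h3⟩ := h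
  have m1 : MemLp φ 2 := (memLp_two_iff_integrable_sq hc.aestronglyMeasurable).2 h1
  have m2 : MemLp φ' 2 := (memLp_two_iff_integrable_sq hl.aestronglyMeasurable).2 h2
  refine ⟨by fun_prop, ?_, ?_, ?_⟩
  · exact (m1.comp_measurePreserving (measurePreserving_add_right volume x₀)).neg
  · exact (m2.comp_measurePreserving (measurePreserving_add_right volume x₀)).neg
  · have h4 : ∀ a b : ℝ, φ b - φ a = ∫ t in a..b, φ' t := by
      intro a b
      rcases le_total a b with hab | hab
      · exact h3 a b hab
      · rw [intervalIntegral.integral_symm, ← h3 b a hab]; ring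
    intro a b
    rw [intervalIntegral.integral_neg, intervalIntegral.integral_comp_add_right, ← h4]
    ring

namespace Good
variable {u v : ℝ → ℝ}

lemma loc (h : Good u v) : LocallyIntegrable v := h.mv.locallyIntegrable (by norm_num)

lemma ii (h : Good u v) (a b : ℝ) : IntervalIntegrable v volume a b :=
  intervalIntegrable_iff.mpr <|
      (h.loc.integrableOn_isCompact isCompact_uIcc).mono_set uIoc_subset_uIcc

lemma reflect (h : Good u v) : Good (fun t => u (-t)) (fun t => - v (-t)) := by
  refine ⟨h.cont.comp continuous_neg, ?_, ?_, ?_⟩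
  · exact h.mu.comp_measurePreserving (Measure.measurePreserving_neg volume)
  · exact (h.mv.comp_measurePreserving (Measure.measurePreserving_neg volume)).neg
  · intro a b
    rw [intervalIntegral.integral_neg, intervalIntegral.integral_comp_neg, ← h.ftc]
    ring

lemma ac (h : Good u v) (a b : ℝ) : AbsolutelyContinuousOnInterval u a b := by
  have h1 := (h.ii a b).absolutelyContinuousOnInterval_intervalIntegral (c := a) (by simp)
  have h2 : u = fun x => (∫ t in a..x, v t) + u a := by
    funext x; rw [← h.ftc]; ring
  have h3 : AbsolutelyContinuousOnInterval (fun _ : ℝ => u a) a b :=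
    (LipschitzWith.const (u a)).lipschitzOnWith.absolutelyContinuousOnInterval
  rw [h2]
  exact h1.add h3

lemma ae_deriv (h : Good u v) : ∀ᵐ x, HasDerivAt u (v x) x := by
  filter_upwards [LocallyIntegrable.ae_hasDerivAt_integral h.loc] with x hx
  have h2 : u = fun x => (∫ t in (0:ℝ)..x, v t) + u 0 := by
    funext x; rw [← h.ftc]; ring
  rw [h2]
  exact (hx 0).add_const _

lemma chain (h : Good u v) {G g : ℝ → ℝ} (hG : ∀ x, HasDerivAt G (g x) x) (hg : Continuous g)
    (a b : ℝ) : G (u b) - G (u a) = ∫ t in a..b, g (u t) * v t := by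
  have hC : ContDiff ℝ 1 G := by
    rw [contDiff_one_iff_deriv]
    refine ⟨fun x => (hG x).differentiableAt, ?_⟩
    have : deriv G = g := funext fun x => (hG x).deriv
    rwa [this]
  obtain ⟨C, hCb⟩ := (h.ac a b).exists_bound
  obtain ⟨K, hK⟩ := hC.contDiffOn.exists_lipschitzOnWith (s := Icc (-C) C) (by norm_num)
    (convex_Icc _ _) isCompact_Icc
  have hac : AbsolutelyContinuousOnInterval (fun t => G (u t)) a b := by
    have h1 := h.ac a b
    unfold AbsolutelyContinuousOnInterval at h1 ⊢
    apply squeeze_zero' ?_ ?_ (by simpa using h1.const_mul (K:ℝ))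
    · exact Filter.Eventually.of_forall <| fun _ ↦ Finset.sum_nonneg (fun i hi ↦ dist_nonneg)
    rw [eventually_inf_principal]
    filter_upwards with (n, I) hnI
    simp only [AbsolutelyContinuousOnInterval.disjWithin, mem_ofPred_eq] at hnI
    simp only [Finset.mul_sum]
    gcongr with i hi
    apply hK.dist_le_mul
    · have := hCb _ (hnI.left i hi).left
      exact abs_le.1 this
    · have := hCb _ (hnI.left i hi).right
      exact abs_le.1 this
  rw [← hac.integral_deriv_eq_sub]
  apply intervalIntegral.integral_congr_ae
  filter_upwards [h.ae_deriv] with x hx _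
  exact ((hG (u x)).comp x hx).deriv

lemma isq (h : Good u v) : Integrable (fun x => u x ^ 2) := h.mu.integrable_sq
lemma isq' (h : Good u v) : Integrable (fun x => v x ^ 2) := h.mv.integrable_sq

lemma sq_ftc (h : Good u v) (a b : ℝ) : u b ^ 2 - u a ^ 2 = ∫ t in a..b, 2 * u t * v t := by
  refine h.chain (G := fun x => x^2) (g := fun x => 2 * x) ?_ (by fun_prop) a b
  intro x; simpa using hasDerivAt_pow 2 x

lemma iuv (h : Good u v) : Integrable (fun x => 2 * u x * v x) := by
  have := (h.mu.integrable_mul h.mv).const_mul 2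
  refine this.congr (Eventually.of_forall fun x => ?_)
  simp only [Pi.mul_apply]
  ring

lemma top (h : Good u v) : Tendsto u atTop (𝓝 0) := by
  have h1 := intervalIntegral_tendsto_integral_Ioi 0 h.iuv.integrableOn tendsto_id
  simp only [id, ← h.sq_ftc] at h1
  have h2 := h1.add_const (u 0 ^ 2)
  simp only [sub_add_cancel] at h2
  have h3 := IntegrableAtFilter.eq_zero_of_tendsto (h.isq.integrableAtFilter atTop) (by
    intro s hs
    obtain ⟨b, hb⟩ := mem_atTop_sets.1 hs
    rw [← top_le_iff, ← Real.volume_Ici (a := b)]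
    exact measure_mono hb) h2
  rw [h3] at h2
  rw [tendsto_zero_iff_abs_tendsto_zero]
  have := h2.sqrt
  simpa [Real.sqrt_sq_eq_abs] using! this

lemma bot (h : Good u v) : Tendsto u atBot (𝓝 0) := by
  have := h.reflect.top.comp tendsto_neg_atBot_atTop
  simpa [Function.comp_def] using this

lemma bound (h : Good u v) (x : ℝ) : u x ^ 2 ≤ (∫ t, u t ^ 2) + ∫ t, v t ^ 2 := by
  have h1 : Tendsto (fun b => u x ^ 2 - u b ^2) atTop (𝓝 (u x ^ 2 - 0 ^ 2)) :=
    tendsto_const_nhds.sub (h.top.pow 2)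
  have h0 : u x ^ 2 = u x ^ 2 - 0 ^ 2 := by ring
  rw [h0]
  refine le_of_tendsto h1 ?_
  filter_upwards [eventually_ge_atTop x] with b hb
  rw [← integral_add h.isq h.isq']
  have h2 : u x ^ 2 - u b ^ 2 = ∫ t in x..b, - (2 * u t * v t) := by
    rw [intervalIntegral.integral_neg, ← h.sq_ftc]; ring
  rw [h2, intervalIntegral.integral_of_le hb]
  calc _ ≤ ∫ t in Ioc x b, (u t ^ 2 + v t ^ 2) := by
        apply setIntegral_mono_on h.iuv.neg.integrableOn (h.isq.add h.isq').integrableOn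
          measurableSet_Ioc
        intro t _
        simp only [Pi.add_apply, Pi.neg_apply]
        nlinarith [sq_nonneg (u t + v t)]
    _ ≤ _ := by
        apply setIntegral_le_integral (h.isq.add h.isq')
        exact Eventually.of_forall fun t => add_nonneg (sq_nonneg _) (sq_nonneg _)

lemma exists_max (h : Good u v) (hp : ∃ x, 0 < u x) : ∃ x, ∀ t, u t ≤ u x := by
  obtain ⟨x₀, hx⟩ := hp
  refine h.cont.exists_forall_ge' x₀ ?_
  rw [cocompact_eq_atBot_atTop, eventually_sup]
  exact ⟨h.bot.eventually_le_const hx, h.top.eventually_le_const hx⟩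

lemma sqrt_bdd (h : Good u v) (p : ℝ) : ∃ C, ∀ t, |√(p^2 - u t)| ≤ C := by
  refine ⟨√(p^2 + √((∫ t, u t ^ 2) + ∫ t, v t ^ 2)), fun t => ?_⟩
  rw [abs_of_nonneg (Real.sqrt_nonneg _)]
  apply Real.sqrt_le_sqrt
  have := Real.abs_le_sqrt (h.bound t)
  linarith [neg_abs_le (u t)]

/-- `∫₀^∞ u √(M-u) u' = - 4/15 M^{5/2}` -/
lemma half_cross (h : Good u v) {p : ℝ} (hp : 0 ≤ p) (hM : ∀ t, u t ≤ p ^ 2) (h0 : u 0 = p ^ 2) :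
    ∫ t in Ioi 0, u t * √(p ^ 2 - u t) * v t = - (4 / 15) * p ^ 5 := by
  set G : ℝ → ℝ := fun s => (2 / 5) * (p^2 - s) ^ ((5:ℝ)/2) - (2/3) * p^2 * (p^2 - s) ^ ((3:ℝ)/2)
  set g : ℝ → ℝ := fun s => - (p^2 - s) ^ ((3:ℝ)/2) + p^2 * (p^2 - s) ^ ((1:ℝ)/2)
  have hG : ∀ x, HasDerivAt G (g x) x := by
    intro x
    have hs : HasDerivAt (fun s : ℝ => p^2 - s) (-1) x := by
      simpa using (hasDerivAt_id x).const_sub (p^2)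
    have h1 := hs.rpow_const (p := (5:ℝ)/2) (Or.inr (by norm_num))
    have h2 := hs.rpow_const (p := (3:ℝ)/2) (Or.inr (by norm_num))
    have h3 := (h1.const_mul (2/5)).sub (h2.const_mul (2/3 * p^2))
    refine h3.congr_deriv ?_
    simp only [g]
    norm_num
    ring
  have hg : Continuous g := by
    have c1 := (Real.continuous_rpow_const (q := (3:ℝ)/2) (by norm_num))
    have c2 := (Real.continuous_rpow_const (q := (1:ℝ)/2) (by norm_num))
    have c3 : Continuous (fun s : ℝ => p^2 - s) := by fun_prop
    exact (c1.comp c3).neg.add ((c2.comp c3).const_mul _)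
  have hgu : ∀ t, g (u t) = u t * √(p ^ 2 - u t) := by
    intro t
    have hn : 0 ≤ p^2 - u t := by linarith [hM t]
    simp only [g]
    have : (p^2 - u t) ^ ((3:ℝ)/2) = (p^2 - u t) * √(p^2 - u t) := by
      rw [show (3:ℝ)/2 = 1 + 1/2 by norm_num, Real.rpow_add_of_nonneg hn (by norm_num) (by norm_num),
        Real.rpow_one, Real.sqrt_eq_rpow]
    rw [this, Real.sqrt_eq_rpow]
    ring
  have hint : Integrable (fun t => u t * √(p ^ 2 - u t) * v t) := by
    obtain ⟨C, hC⟩ := h.sqrt_bdd p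
    have := (h.mu.integrable_mul h.mv).bdd_mul (c := C) (f := fun t => √(p^2 - u t))
      (by have := h.cont; exact (by fun_prop : Continuous (fun t => √(p^2 - u t))).aestronglyMeasurable)
      (Eventually.of_forall hC)
    refine this.congr (Eventually.of_forall fun x => ?_)
    simp only [Pi.mul_apply]
    ring
  have h1 := intervalIntegral_tendsto_integral_Ioi 0 hint.integrableOn tendsto_id
  have h2 : ∀ b, ∫ t in (0:ℝ)..b, u t * √(p ^ 2 - u t) * v t = G (u b) - G (u 0) := by
    intro b
    rw [h.chain hG hg]
    simp only [hgu]
  simp only [id, h2] at h1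
  have hGc : Continuous G := continuous_iff_continuousAt.2 fun x => (hG x).continuousAt
  have h3 : Tendsto (fun b => G (u b) - G (u 0)) atTop (𝓝 (G 0 - G (u 0))) :=
    ((hGc.tendsto 0).comp h.top).sub_const _
  rw [tendsto_nhds_unique h1 h3, h0]
  simp only [G, sub_zero, sub_self]
  rw [Real.zero_rpow (by norm_num), Real.zero_rpow (by norm_num), ← Real.rpow_natCast_mul hp,
    ← Real.rpow_natCast_mul hp]
  norm_num
  ring

end Good

namespace Good
variable {u v : ℝ → ℝ}

lemma memF (h : Good u v) (p : ℝ) : MemLp (fun t => u t * √(p ^ 2 - u t)) 2 := by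
  obtain ⟨C, hC⟩ := h.sqrt_bdd p
  have hc := h.cont
  refine MemLp.of_le_mul (c := C) h.mu
    (by exact (by fun_prop : Continuous fun t => u t * √(p ^ 2 - u t)).aestronglyMeasurable)
    (Eventually.of_forall fun t => ?_)
  rw [norm_mul, mul_comm]
  exact mul_le_mul_of_nonneg_right (hC t) (norm_nonneg _)

lemma half_def (h : Good u v) {p k : ℝ} (hp : 0 ≤ p) (hM : ∀ t, u t ≤ p ^ 2) (h0 : u 0 = p ^ 2) :
    ∫ t in Ioi 0, (v t + k * (u t * √(p ^ 2 - u t))) ^ 2 =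
      (∫ t in Ioi 0, (v t ^ 2 + k ^ 2 * (u t ^ 2 * (p ^ 2 - u t)))) - (8 / 15) * k * p ^ 5 := by
  have hF := h.memF p
  have e1 : ∀ t, (v t + k * (u t * √(p ^ 2 - u t))) ^ 2 =
    (v t ^ 2 + k ^ 2 * (u t ^ 2 * (p ^ 2 - u t))) + (2 * k) * (u t * √(p ^ 2 - u t) * v t) := by
    intro t
    have := Real.sq_sqrt (show 0 ≤ p^2 - u t by linarith [hM t])
    linear_combination k ^ 2 * u t ^ 2 * this
  have e2 : ∀ t, (u t * √(p ^ 2 - u t))^2 = (u t ^ 2 * (p ^ 2 - u t)) := by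
    intro t
    rw [mul_pow, Real.sq_sqrt (show 0 ≤ p^2 - u t by linarith [hM t])]
  have i1 := hF.integrable_sq
  simp only [e2] at i1
  have i2 : Integrable (fun t => u t * √(p ^ 2 - u t) * v t) := hF.integrable_mul h.mv
  simp only [e1]
  have i3 : Integrable fun t => v t ^ 2 + k ^ 2 * (u t ^ 2 * (p ^ 2 - u t)) :=
    h.isq'.add (i1.const_mul _)
  rw [integral_add i3.integrableOn (i2.const_mul _).integrableOn,
    integral_const_mul, h.half_cross hp hM h0]
  ring

lemma full_def (h : Good u v) {p k : ℝ} (hp : 0 ≤ p) (hM : ∀ t, u t ≤ p ^ 2) (h0 : u 0 = p ^ 2) :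
    (∫ t in Ioi 0, (v t + k * (u t * √(p ^ 2 - u t))) ^ 2) +
    (∫ t in Ioi 0, (- v (-t) + k * (u (-t) * √(p ^ 2 - u (-t)))) ^ 2) =
      (∫ t, (v t ^ 2 - k ^ 2 * u t ^ 3)) + k ^ 2 * p ^ 2 * (∫ t, u t ^ 2) - (16 / 15) * k * p ^ 5
      := by
  have e2 : ∀ t, (u t * √(p ^ 2 - u t))^2 = (u t ^ 2 * (p ^ 2 - u t)) := by
    intro t
    rw [mul_pow, Real.sq_sqrt (show 0 ≤ p^2 - u t by linarith [hM t])]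
  have i1 := (h.memF p).integrable_sq
  simp only [e2] at i1
  have i0 : Integrable fun t => v t ^ 2 + k ^ 2 * (u t ^ 2 * (p ^ 2 - u t)) :=
    h.isq'.add (i1.const_mul _)
  rw [h.half_def hp hM h0, h.reflect.half_def hp (fun t => hM _) (by simpa using h0)]
  have e3 : ∫ t in Ioi 0, ((- v (-t)) ^ 2 + k ^ 2 * (u (-t) ^ 2 * (p ^ 2 - u (-t)))) =
      ∫ t in Iic 0, (v t ^ 2 + k ^ 2 * (u t ^ 2 * (p ^ 2 - u t))) := by
    have := integral_comp_neg_Ioi 0 (fun t => (v t ^ 2 + k ^ 2 * (u t ^ 2 * (p ^ 2 - u t))))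
    rw [neg_zero] at this
    rw [← this]
    simp only [neg_sq]
  have e4 := integral_add_compl (μ := volume) (s := Iic (0:ℝ)) measurableSet_Iic i0
  rw [compl_Iic] at e4
  have e5 : ∫ t, (v t ^ 2 + k ^ 2 * (u t ^ 2 * (p ^ 2 - u t))) =
      (∫ t, (v t ^ 2 - k ^ 2 * u t ^ 3)) + k ^ 2 * p ^ 2 * (∫ t, u t ^ 2) := by
    rw [← integral_const_mul, ← integral_add]
    · congr 1; funext t; ring
    · have := i0.sub (h.isq.const_mul (k^2 * p^2))
      refine this.congr (Eventually.of_forall fun x => ?_)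
      simp only [Pi.sub_apply]; ring
    · exact h.isq.const_mul _
  rw [e3]
  linarith

end Good

lemma cs_int {μ : Measure ℝ} {f g : ℝ → ℝ} (hf : MemLp f 2 μ) (hg : MemLp g 2 μ) :
    ∫ t, |f t| * |g t| ∂μ ≤ √(∫ t, f t ^ 2 ∂μ) * √(∫ t, g t ^ 2 ∂μ) := by
  have := integral_mul_le_Lp_mul_Lq_of_nonneg (μ := μ) (p := 2) (q := 2)
    (f := fun t => |f t|) (g := fun t => |g t|) Real.HolderConjugate.two_two
    (Eventually.of_forall fun t => abs_nonneg _) (Eventually.of_forall fun t => abs_nonneg _)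
    (by simpa using! hf.abs) (by simpa using! hg.abs)
  simpa [Real.sqrt_eq_rpow] using this

lemma sech_deriv (N b τ x : ℝ) : HasDerivAt (fun x => N * sech (b * (x + τ)) ^ 2)
    (-2 * b * (N * sech (b * (x + τ)) ^ 2) * Real.tanh (b * (x + τ))) x := by
  have hcosh := (Real.cosh_pos (b * (x + τ))).ne'
  have h1 : HasDerivAt (fun x => b * (x + τ)) b x := by
    simpa using ((hasDerivAt_id x).add_const τ).const_mul b
  have h2 : HasDerivAt (fun x => Real.cosh (b * (x + τ))) (Real.sinh (b * (x + τ)) * b) x :=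
    h1.cosh
  have h3 := ((h2.fun_inv hcosh).fun_pow 2).const_mul N
  have h4 : (fun x => N * sech (b * (x + τ)) ^ 2) =
      fun x => N * ((Real.cosh (b * (x + τ)))⁻¹ ^ 2) := by
    funext y; simp [sech]
  rw [h4]
  refine h3.congr_deriv ?_
  simp only [Real.tanh_eq_sinh_div_cosh, sech]
  field_simp
  norm_num
  field_simp

lemma sech_sqrt {N y : ℝ} (hN : 0 ≤ N) (hy : 0 ≤ y) :
    √(N - N * sech y ^ 2) = √N * Real.tanh y := by
  have ht : 0 ≤ Real.tanh y := by
    rw [Real.tanh_eq_sinh_div_cosh]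
    apply div_nonneg _ (Real.cosh_pos _).le
    rwa [Real.sinh_nonneg_iff]
  rw [← Real.sqrt_sq ht, ← Real.sqrt_mul hN]
  congr 1
  simp only [sech, Real.tanh_eq_sinh_div_cosh]
  have := (Real.cosh_pos y).ne'
  have h2 := Real.cosh_sq y
  field_simp
  rw [h2]; ring

/-- the comparison lemma: pointwise lower bound -/
lemma lower {k A N τ X : ℝ} (hk : 0 < k) (hA : 0 < A) (hN : A < N) (hτ : 0 < τ) (hX : 0 ≤ X)
    (hs0 : N * sech (k * √N / 2 * τ) ^ 2 < A)
    {u v : ℕ → ℝ → ℝ} {p : ℕ → ℝ} (hg : ∀ m, Good (u m) (v m)) (hM : ∀ m t, u m t ≤ p m ^ 2)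
    (h0 : ∀ m, u m 0 = p m ^ 2) (hp : Tendsto (fun m => p m ^ 2) atTop (𝓝 A))
    (hD : Tendsto (fun m => ∫ t in Ioi 0, (v m t + k * (u m t * √(p m ^ 2 - u m t))) ^ 2)
      atTop (𝓝 0)) (η : ℝ) (hη : 0 < η) :
    ∀ᶠ m in atTop, N * sech (k * √N / 2 * (X + τ)) ^ 2 - η < u m X := by
  have hN0 : 0 < N := hA.trans hN
  set b := k * √N / 2 with hb
  have hbpos : 0 < b := by positivity
  set s : ℝ → ℝ := fun x => N * sech (b * (x + τ)) ^ 2 with hs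
  have hcosh : ∀ x, 0 < Real.cosh x := Real.cosh_pos
  have hsder : ∀ x, HasDerivAt s (-2 * b * s x * Real.tanh (b * (x + τ))) x :=
    fun x => sech_deriv N b τ x
  have hspos : ∀ x, 0 < s x := by
    intro x
    have := hcosh (b * (x+τ))
    simp only [hs, sech]; positivity
  have hsN : ∀ x, s x ≤ N := by
    intro x
    have h1 := Real.one_le_cosh (b * (x+τ))
    simp only [hs, sech]
    have : (1 / Real.cosh (b * (x+τ)))^2 ≤ 1 := by
      apply pow_le_one₀ (by positivity)
      rw [div_le_one (hcosh _)]; exact h1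
    nlinarith
  have hsd : ∀ x, 0 ≤ x → -2 * b * s x * Real.tanh (b * (x + τ)) = - k * s x * √(N - s x) := by
    intro x hx
    have h1 : √(N - s x) = √N * Real.tanh (b * (x + τ)) :=
      sech_sqrt hN0.le (by positivity)
    rw [h1, hb]; ring
  have hsanti : ∀ x, 0 ≤ x → x ≤ X → s X ≤ s x := by
    intro x hx hxX
    simp only [hs, sech]
    have : Real.cosh (b * (x+τ)) ≤ Real.cosh (b * (X+τ)) := by
      rw [Real.cosh_le_cosh, abs_of_nonneg (by positivity), abs_of_nonneg (by positivity)]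
      gcongr
    gcongr
  -- the gap function
  have hgap : ∃ ε > 0, ε ≤ η ∧ s 0 + ε < A ∧ ∀ y, s X ≤ y → y ≤ N → (y + ε) ^ 2 * (A + ε + ε - y)
      < y ^ 2 * (N - y) := by
    set δ := s X ^ 2 * (N - A) with hδ
    have hδ0 : 0 < δ := by have := hspos X; have : 0 < N - A := by linarith
                           positivity
    have hlim : Tendsto (fun ε : ℝ => (2 * N * ε + ε ^ 2) * (A + 2 * ε + N) + 2 * ε * N ^ 2)
        (𝓝[>] 0) (𝓝 ((2 * N * 0 + 0 ^ 2) * (A + 2 * 0 + N) + 2 * 0 * N ^ 2)) := by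
      apply Tendsto.mono_left _ nhdsWithin_le_nhds
      apply Continuous.tendsto
      fun_prop
    have hev := hlim.eventually_lt_const (u := δ) (by simpa using hδ0)
    have hs0' : s 0 < A := by simpa [hs] using hs0
    have hev2 : ∀ᶠ ε : ℝ in 𝓝[>] 0, ε < min η (A - s 0) := by
      apply eventually_nhdsWithin_of_eventually_nhds
      exact eventually_lt_nhds (by simp [hη, hs0'])
    obtain ⟨ε, h1, h2, h3⟩ := (hev.and (hev2.and self_mem_nhdsWithin)).exists
    have h3' : 0 < ε := h3
    have h4 := lt_min_iff.1 h2
    refine ⟨ε, h3, h4.1.le, by linarith, ?_⟩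
    intro y hy hyN
    have hy0 : 0 < y := (hspos X).trans_le hy
    have a1 : (y + ε) ^ 2 * (A + ε + ε - y) = y ^ 2 * (A - y) + ((2 * y * ε + ε^2) * (A + 2 * ε - y)
      + 2 * ε * y ^ 2) := by ring
    have a2 : (2 * y * ε + ε^2) * (A + 2 * ε - y) ≤ (2 * N * ε + ε ^ 2) * (A + 2 * ε + N) := by
      calc _ ≤ (2 * y * ε + ε^2) * (A + 2 * ε + N) := by gcongr; linarith
        _ ≤ _ := by gcongr
    have a3 : 2 * ε * y ^ 2 ≤ 2 * ε * N ^ 2 := by gcongr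
    have a4 : δ ≤ y ^ 2 * (N - A) := by
      rw [hδ]; have := (hspos X).le; have : 0 ≤ N - A := by linarith
      gcongr
    nlinarith
  obtain ⟨ε, hε, hεη, hε0, hgap⟩ := hgap
  have hD2 : Tendsto (fun m => √(∫ t in Ioi 0, (v m t + k * (u m t * √(p m ^ 2 - u m t))) ^ 2) * √X)
      atTop (𝓝 0) := by
    simpa using hD.sqrt.mul_const (√X)
  filter_upwards [hD2.eventually_lt_const hε, hp.eventually_lt_const (show A < A + ε by linarith),
    hp.eventually_const_lt (show A - ε < A by linarith)] with m hm1 hm2 hm3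
  have g := hg m
  have hc := g.cont
  set e : ℝ → ℝ := fun t => v m t + k * (u m t * √(p m ^ 2 - u m t)) with he
  have hFc : Continuous fun t => u m t * √(p m ^ 2 - u m t) := by fun_prop
  have me : MemLp e 2 := g.mv.add ((g.memF (p m)).const_mul k)
  have ie : ∀ a b, IntervalIntegrable e volume a b := fun a b =>
    (g.ii a b).add ((hFc.const_mul k).intervalIntegrable a b)
  set w : ℝ → ℝ := fun x => u m 0 - ∫ t in (0:ℝ)..x, k * (u m t * √(p m ^ 2 - u m t)) with hw
  have hwder : ∀ x, HasDerivAt w (-(k * (u m x * √(p m ^ 2 - u m x)))) x := by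
    intro x
    have := ((hFc.const_mul k).integral_hasStrictDerivAt 0 x).hasDerivAt
    exact this.const_sub _
  have hwu : ∀ x, u m x - w x = ∫ t in (0:ℝ)..x, e t := by
    intro x
    simp only [he, hw]
    rw [intervalIntegral.integral_add (g.ii 0 x) ((hFc.const_mul k).intervalIntegrable 0 x), ← g.ftc]
    ring
  have hclose : ∀ x, 0 ≤ x → x ≤ X → |u m x - w x| < ε := by
    intro x hx hxX
    rw [hwu]
    refine lt_of_le_of_lt ?_ hm1
    calc |∫ t in (0:ℝ)..x, e t| ≤ ∫ t in (0:ℝ)..x, |e t| :=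
          intervalIntegral.abs_integral_le_integral_abs hx
      _ ≤ ∫ t in (0:ℝ)..X, |e t| := by
          apply intervalIntegral.integral_mono_interval le_rfl hx hxX _ (ie 0 X).abs
          exact Eventually.of_forall fun t => abs_nonneg _
      _ = ∫ t in Ioc 0 X, |e t| * |(1:ℝ)| := by
          rw [intervalIntegral.integral_of_le hX]; simp
      _ ≤ √(∫ t in Ioc 0 X, e t ^ 2) * √(∫ t in Ioc 0 X, (1:ℝ) ^ 2) :=
          cs_int (g := fun _ => 1) (me.restrict _) (memLp_const 1)
      _ ≤ _ := by
          gcongr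
          · exact Eventually.of_forall fun t => sq_nonneg _
          · exact me.integrable_sq.integrableOn
          · exact Ioc_subset_Ioi_self
          · simp [hX]
  have hcmp : ∀ ⦃x⦄, x ∈ Icc 0 X → s x ≤ w x := by
    refine image_le_of_deriv_right_lt_deriv_boundary
      (f' := fun x => -2 * b * s x * Real.tanh (b * (x + τ)))
      (B' := fun x => -(k * (u m x * √(p m ^ 2 - u m x)))) ?_ ?_ ?_ ?_ ?_
    · exact fun x _ => (hsder x).continuousAt.continuousWithinAt
    · exact fun x _ => (hsder x).hasDerivWithinAt
    · simp only [hw, intervalIntegral.integral_same, sub_zero, h0]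
      linarith
    · exact hwder
    · intro x hx hsw
      rw [hsd x hx.1]
      have hcl := abs_lt.1 (hclose x hx.1 hx.2.le)
      rw [← hsw] at hcl
      have hgx := hgap (s x) (hsanti x hx.1 hx.2.le) (hsN x)
      have hsx := hspos x
      have key : u m x * √(p m ^ 2 - u m x) < s x * √(N - s x) := by
        rcases le_or_gt (u m x) 0 with hneg | hpos
        · have : 0 < s x * √(N - s x) := by
            apply mul_pos hsx
            apply Real.sqrt_pos.2
            by_contra hcon
            have : (s x + ε)^2 * (A + ε + ε - s x) < 0 := by nlinarith [sq_nonneg (s x)]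
            have : 0 ≤ A + ε + ε - s x := by
              linarith
            have : 0 ≤ (s x + ε)^2 * (A + ε + ε - s x) := by positivity
            linarith
          have : u m x * √(p m ^ 2 - u m x) ≤ 0 :=
            mul_nonpos_of_nonpos_of_nonneg hneg (Real.sqrt_nonneg _)
          linarith
        · have hq : 0 ≤ p m ^ 2 - u m x := by linarith [hM m x]
          apply lt_of_pow_lt_pow_left₀ 2 (mul_nonneg hsx.le (Real.sqrt_nonneg _))
          rw [mul_pow, mul_pow, Real.sq_sqrt hq, Real.sq_sqrt (by linarith [hsN x])]
          refine lt_of_le_of_lt ?_ hgx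
          have : p m ^ 2 - u m x ≤ A + ε + ε - s x := by linarith
          have : u m x ≤ s x + ε := by linarith
          gcongr
      nlinarith
  have hX1 := hcmp (right_mem_Icc.2 hX)
  have hX2 := abs_lt.1 (hclose X hX le_rfl)
  have : s X = N * sech (b * (X + τ)) ^ 2 := rfl
  linarith

lemma continuous_sech : Continuous sech := by
  unfold sech
  exact continuous_const.div Real.continuous_cosh fun x => (Real.cosh_pos x).ne'

lemma sech_pos (x : ℝ) : 0 < sech x := by
  unfold sech; have := Real.cosh_pos x; positivity

lemma sech_le_one (x : ℝ) : sech x ≤ 1 := by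
  unfold sech
  rw [div_le_one (Real.cosh_pos _)]; exact Real.one_le_cosh x

lemma sech_neg (x : ℝ) : sech (-x) = sech x := by simp [sech]

lemma integrable_sech_sq : Integrable (fun x => sech x ^ 2) := by
  refine integrable_inv_one_add_sq.mono' (continuous_sech.pow 2).aestronglyMeasurable
    (Eventually.of_forall fun x => ?_)
  rw [Real.norm_of_nonneg (by positivity)]
  unfold sech
  rw [div_pow, one_pow, one_div]
  have h1 := Real.cosh_sq x
  have h2 : x ^ 2 ≤ Real.sinh x ^ 2 := by
    rcases le_total 0 x with hx | hx
    · have := Real.self_le_sinh_iff.2 hx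
      gcongr
    · have := Real.sinh_le_self_iff.2 hx
      nlinarith
  gcongr
  linarith

lemma tanh_top : Tendsto Real.tanh atTop (𝓝 1) := by
  have h : ∀ x, 0 ≤ x → 1 - Real.exp (-x) ≤ Real.tanh x := by
    intro x _
    rw [Real.tanh_eq_sinh_div_cosh, le_div_iff₀ (Real.cosh_pos x)]
    have h1 := Real.cosh_sub_sinh x
    have h2 := Real.one_le_cosh x
    nlinarith [Real.exp_pos (-x)]
  have h2 : ∀ x, Real.tanh x ≤ 1 := fun x => by
    rw [Real.tanh_eq_sinh_div_cosh, div_le_one (Real.cosh_pos x)]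
    exact (Real.sinh_lt_cosh x).le
  have h3 : Tendsto (fun x => 1 - Real.exp (-x)) atTop (𝓝 (1 - 0)) :=
    tendsto_const_nhds.sub (Real.tendsto_exp_neg_atTop_nhds_zero)
  rw [sub_zero] at h3
  refine tendsto_of_tendsto_of_tendsto_of_le_of_le' h3 tendsto_const_nhds ?_
    (Eventually.of_forall h2)
  filter_upwards [eventually_ge_atTop 0] with x hx using h x hx

lemma tanh_bot : Tendsto Real.tanh atBot (𝓝 (-1)) := by
  have := (tanh_top.comp tendsto_neg_atBot_atTop).neg
  simpa [Function.comp_def] using this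

lemma integrable_sech_four : Integrable (fun x => sech x ^ 4) := by
  refine integrable_sech_sq.mono' (continuous_sech.pow 4).aestronglyMeasurable
    (Eventually.of_forall fun x => ?_)
  rw [Real.norm_of_nonneg (by positivity)]
  exact pow_le_pow_of_le_one (sech_pos x).le (sech_le_one x) (by norm_num)

lemma integral_sech_four : ∫ x, sech x ^ 4 = 4 / 3 := by
  have hT : ∀ x, HasDerivAt Real.tanh (sech x ^ 2) x := by
    intro x
    have h0 := (Real.cosh_pos x).ne'
    have := (Real.hasDerivAt_sinh x).fun_div (Real.hasDerivAt_cosh x) h0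
    rw [show Real.tanh = fun x => Real.sinh x / Real.cosh x from
      funext Real.tanh_eq_sinh_div_cosh]
    refine this.congr_deriv ?_
    have h2 := Real.cosh_sq x
    unfold sech
    field_simp
    rw [h2]; ring
  have hH : ∀ x, HasDerivAt (fun x => Real.tanh x - Real.tanh x ^ 3 / 3) (sech x ^ 4) x := by
    intro x
    have := (hT x).fun_sub (((hT x).fun_pow 3).div_const 3)
    refine this.congr_deriv ?_
    have h0 := (Real.cosh_pos x).ne'
    have h2 : Real.tanh x ^ 2 = 1 - sech x ^ 2 := by
      rw [Real.tanh_eq_sinh_div_cosh]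
      have h2 := Real.cosh_sq x
      unfold sech
      field_simp
      rw [h2]; ring
    norm_num
    rw [h2]; ring
  have h1 := tanh_top.sub ((tanh_top.pow 3).div_const 3)
  have h2 := tanh_bot.sub ((tanh_bot.pow 3).div_const 3)
  rw [integral_of_hasDerivAt_of_tendsto hH integrable_sech_four h2 h1]
  norm_num

lemma lower0 {k a X : ℝ} (hk : 0 < k) (ha : 0 < a) (hX : 0 ≤ X)
    {u v : ℕ → ℝ → ℝ} {p : ℕ → ℝ} (hg : ∀ m, Good (u m) (v m)) (hM : ∀ m t, u m t ≤ p m ^ 2)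
    (h0 : ∀ m, u m 0 = p m ^ 2) (hp : Tendsto p atTop (𝓝 a))
    (hD : Tendsto (fun m => ∫ t in Ioi 0, (v m t + k * (u m t * √(p m ^ 2 - u m t))) ^ 2)
      atTop (𝓝 0)) (η : ℝ) (hη : 0 < η) :
    ∀ᶠ m in atTop, a ^ 2 * sech (k * a / 2 * X) ^ 2 - η < u m X := by
  have hcs := continuous_sech
  have ha2 : 0 < a ^ 2 := by positivity
  have hsq : √(a ^ 2) = a := Real.sqrt_sq ha.le
  have t1 : Tendsto (fun τ => a ^ 2 * sech (k * a / 2 * (X + τ)) ^ 2) (𝓝[>] 0)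
      (𝓝 (a ^ 2 * sech (k * a / 2 * (X + 0)) ^ 2)) := by
    apply Tendsto.mono_left _ nhdsWithin_le_nhds
    apply Continuous.tendsto (by fun_prop)
  rw [add_zero] at t1
  obtain ⟨τ, hτ1, hτ⟩ := ((t1.eventually_const_lt
    (show a ^ 2 * sech (k * a / 2 * X) ^ 2 - η / 3 < _ by linarith)).and self_mem_nhdsWithin).exists
  have hτ : 0 < τ := hτ
  have t2 : Tendsto (fun N => N * sech (k * √N / 2 * (X + τ)) ^ 2) (𝓝[>] (a ^ 2))
      (𝓝 (a ^ 2 * sech (k * √(a ^ 2) / 2 * (X + τ)) ^ 2)) := by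
    apply Tendsto.mono_left _ nhdsWithin_le_nhds
    apply Continuous.tendsto (f := fun N => N * sech (k * √N / 2 * (X + τ)) ^ 2) (by fun_prop)
  have t3 : Tendsto (fun N => N * sech (k * √N / 2 * τ) ^ 2) (𝓝[>] (a ^ 2))
      (𝓝 (a ^ 2 * sech (k * √(a ^ 2) / 2 * τ) ^ 2)) := by
    apply Tendsto.mono_left _ nhdsWithin_le_nhds
    apply Continuous.tendsto (f := fun N => N * sech (k * √N / 2 * τ) ^ 2) (by fun_prop)
  rw [hsq] at t2 t3
  have hlt : a ^ 2 * sech (k * a / 2 * τ) ^ 2 < a ^ 2 := by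
    have h1 : sech (k * a / 2 * τ) < 1 := by
      unfold sech
      rw [div_lt_one (Real.cosh_pos _), Real.one_lt_cosh]
      positivity
    have h2 : sech (k * a / 2 * τ) ^ 2 < 1 := pow_lt_one₀ (sech_pos _).le h1 (by norm_num)
    nlinarith
  obtain ⟨N, hN1, hN2, hN⟩ := ((t2.eventually_const_lt
    (show a ^ 2 * sech (k * a / 2 * (X + τ)) ^ 2 - η / 3 < _ by linarith)).and
    ((t3.eventually_lt_const hlt).and self_mem_nhdsWithin)).exists
  filter_upwards [lower hk ha2 hN hτ hX hN2 hg hM h0 (hp.pow 2) hD (η / 3) (by linarith)] with m hm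
  linarith

lemma l2conv {S : ℝ → ℝ} {u : ℕ → ℝ → ℝ} {K : ℝ} (hSc : Continuous S) (hS0 : ∀ t, 0 ≤ S t)
    (hSi : Integrable S) (hS2 : MemLp S 2) (hu : ∀ m, MemLp (u m) 2) (hK : 0 ≤ K)
    (hK : ∀ m t, -K ≤ u m t)
    (heq : ∀ m, ∫ t, u m t ^ 2 = ∫ t, S t ^ 2)
    (hlow : ∀ t, ∀ η > 0, ∀ᶠ m in atTop, S t - η < u m t) :
    Tendsto (fun m => ∫ t, (u m t - S t) ^ 2) atTop (𝓝 0) := by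
  have hiS := hS2.integrable_sq
  have i1 : ∀ m, Integrable (fun t => S t * u m t) := fun m => hS2.integrable_mul (hu m)
  have hbd : Integrable (fun t => S t ^ 2 + K * S t) := hiS.add (hSi.const_mul K)
  have hms : ∀ m, AEStronglyMeasurable (fun t => S t * max (S t - u m t) 0) := by
    intro m
    exact hS2.1.mul ((hS2.1.sub (hu m).1).sup aestronglyMeasurable_const)
  have hb : ∀ m t, ‖S t * max (S t - u m t) 0‖ ≤ S t ^ 2 + K * S t := by
    intro m t
    rw [Real.norm_of_nonneg (mul_nonneg (hS0 t) (le_max_right _ _))]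
    have : max (S t - u m t) 0 ≤ S t + K := max_le (by linarith [hK m t]) (by linarith [hS0 t])
    nlinarith [hS0 t]
  have hlim : Tendsto (fun m => ∫ t, S t * max (S t - u m t) 0) atTop (𝓝 (∫ _ : ℝ, (0:ℝ))) := by
    refine tendsto_integral_of_dominated_convergence _ hms hbd
      (fun m => Eventually.of_forall (hb m)) (Eventually.of_forall fun t => ?_)
    have : Tendsto (fun m => max (S t - u m t) 0) atTop (𝓝 0) := by
      rw [Metric.tendsto_nhds]
      intro ε hε
      filter_upwards [hlow t ε hε] with m hm
      rw [Real.dist_eq, sub_zero, abs_of_nonneg (le_max_right _ _)]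
      exact max_lt (by linarith) hε
    simpa using this.const_mul (S t)
  rw [integral_zero] at hlim
  have h2 := hlim.const_mul 2
  rw [mul_zero] at h2
  refine squeeze_zero (fun m => integral_nonneg fun t => sq_nonneg _) (fun m => ?_) h2
  have e1 : ∫ t, (u m t - S t) ^ 2 = 2 * ∫ t, (S t ^ 2 - S t * u m t) := by
    have : ∀ t, (u m t - S t) ^ 2 = (u m t ^ 2 - S t ^ 2) + 2 * (S t ^ 2 - S t * u m t) := by
      intro t; ring
    simp only [this]
    have j1 : Integrable fun t => u m t ^ 2 - S t ^ 2 := (hu m).integrable_sq.sub hiS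
    have j2 : Integrable fun t => S t ^ 2 - S t * u m t := hiS.sub (i1 m)
    rw [integral_add j1 (j2.const_mul 2),
      integral_const_mul, integral_sub (hu m).integrable_sq hiS, heq]
    ring
  rw [e1]
  gcongr ?_ * ?_
  apply integral_mono (hiS.sub (i1 m))
  · exact hbd.mono' (hms m) (Eventually.of_forall (hb m))
  · intro t
    have := le_max_left (S t - u m t) 0
    simp only [Pi.sub_apply]
    nlinarith [hS0 t]

lemma h1half {k a C : ℝ} {S : ℝ → ℝ} {u v : ℕ → ℝ → ℝ} {p : ℕ → ℝ} (hSc : Continuous S)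
    (hS0 : ∀ t, 0 ≤ S t) (hSa : ∀ t, S t ≤ a ^ 2) (hS2 : MemLp S 2)
    (hg : ∀ m, Good (u m) (v m)) (hM : ∀ m t, u m t ≤ p m ^ 2) (hp : Tendsto p atTop (𝓝 a))
    (hC : ∀ m t, p m ^ 2 - u m t ≤ C)
    (hD : Tendsto (fun m => ∫ t in Ioi 0, (v m t + k * (u m t * √(p m ^ 2 - u m t))) ^ 2)
      atTop (𝓝 0))
    (hL : Tendsto (fun m => ∫ t, (u m t - S t) ^ 2) atTop (𝓝 0)) :
    Tendsto (fun m => ∫ t in Ioi 0, (v m t - (- k * S t * √(a ^ 2 - S t))) ^ 2) atTop (𝓝 0) := by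
  have hiS := hS2.integrable_sq
  have hSS : MemLp (fun t => S t ^ 2) 2 := by
    refine MemLp.of_le_mul (c := a ^ 2) hS2 (hSc.pow 2).aestronglyMeasurable
      (Eventually.of_forall fun t => ?_)
    rw [Real.norm_of_nonneg (by positivity), Real.norm_of_nonneg (hS0 t)]
    nlinarith [hS0 t, hSa t]
  have hlim : Tendsto (fun m =>
      2 * (∫ t in Ioi 0, (v m t + k * (u m t * √(p m ^ 2 - u m t))) ^ 2) +
      4 * k ^ 2 * (C * (∫ t, (u m t - S t) ^ 2) + |p m ^ 2 - a ^ 2| * (∫ t, S t ^ 2) +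
        √(∫ t, (S t ^ 2) ^ 2) * √(∫ t, (u m t - S t) ^ 2))) atTop
      (𝓝 (2 * 0 + 4 * k ^ 2 * (C * 0 + |a ^ 2 - a ^ 2| * (∫ t, S t ^ 2) +
        √(∫ t, (S t ^ 2) ^ 2) * √0))) := by
    refine (hD.const_mul 2).add (((((hL.const_mul C).add
      ((((hp.pow 2).sub_const (a ^ 2)).abs).mul_const _)).add (hL.sqrt.const_mul _))).const_mul _)
  simp only [sub_self, abs_zero, Real.sqrt_zero, mul_zero, zero_mul, add_zero] at hlim
  refine squeeze_zero (fun m => integral_nonneg fun t => sq_nonneg _) (fun m => ?_) hlim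
  have g := hg m
  have md : MemLp (fun t => u m t - S t) 2 := g.mu.sub hS2
  have mq : MemLp (fun t => v m t + k * (u m t * √(p m ^ 2 - u m t))) 2 :=
    g.mv.add ((g.memF (p m)).const_mul k)
  have i1 := mq.integrable_sq
  have i2 := md.integrable_sq
  have i3 : Integrable (fun t => |S t ^ 2| * |u m t - S t|) := by
    have : MemLp (fun t => |S t ^ 2|) 2 := hSS.abs
    exact MemLp.integrable_mul this md.abs
  have iR : Integrable (fun t => C * (u m t - S t) ^ 2 + |p m ^ 2 - a ^ 2| * S t ^ 2 +
    |S t ^ 2| * |u m t - S t|) := ((i2.const_mul C).add (hiS.const_mul _)).add i3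
  have hpt : ∀ t, (v m t - (- k * S t * √(a ^ 2 - S t))) ^ 2 ≤
      2 * (v m t + k * (u m t * √(p m ^ 2 - u m t))) ^ 2 + 4 * k ^ 2 *
      (C * (u m t - S t) ^ 2 + |p m ^ 2 - a ^ 2| * S t ^ 2 + |S t ^ 2| * |u m t - S t|) := by
    intro t
    set x := √(p m ^ 2 - u m t) with hx
    set y := √(a ^ 2 - S t) with hy
    have hx0 : 0 ≤ x := Real.sqrt_nonneg _
    have hy0 : 0 ≤ y := Real.sqrt_nonneg _
    have hx2 : x ^ 2 = p m ^ 2 - u m t := Real.sq_sqrt (by linarith [hM m t])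
    have hy2 : y ^ 2 = a ^ 2 - S t := Real.sq_sqrt (by linarith [hSa t])
    have hxy : (x - y) ^ 2 ≤ |p m ^ 2 - a ^ 2| + |u m t - S t| := by
      have h1 : (x - y) ^ 2 ≤ |x ^ 2 - y ^ 2| := by
        rw [show x ^ 2 - y ^ 2 = (x + y) * (x - y) by ring, abs_mul, ← sq_abs (x - y), sq]
        apply mul_le_mul_of_nonneg_right _ (abs_nonneg _)
        rw [abs_of_nonneg (by linarith : 0 ≤ x + y), abs_le]
        constructor <;> linarith
      refine h1.trans ?_
      rw [hx2, hy2, show p m ^ 2 - u m t - (a ^ 2 - S t) = (p m ^ 2 - a ^ 2) - (u m t - S t) by ring]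
      exact abs_sub _ _
    have hxC : x ^ 2 ≤ C := by rw [hx2]; exact hC m t
    rw [abs_of_nonneg (sq_nonneg (S t))]
    set q := v m t + k * (u m t * x) with hq
    set r := u m t * x - S t * y with hr
    have e1 : v m t - (- k * S t * y) = q - k * r := by rw [hq, hr]; ring
    have e2 : r = (u m t - S t) * x + S t * (x - y) := by rw [hr]; ring
    have b1 : r ^ 2 ≤ 2 * ((u m t - S t) ^ 2 * x ^ 2) + 2 * (S t ^ 2 * (x - y) ^ 2) := by
      rw [e2]; nlinarith [sq_nonneg ((u m t - S t) * x - S t * (x - y))]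
    have b2 : (u m t - S t) ^ 2 * x ^ 2 ≤ (u m t - S t) ^ 2 * C := by gcongr
    have b3 : S t ^ 2 * (x - y) ^ 2 ≤ S t ^ 2 * (|p m ^ 2 - a ^ 2| + |u m t - S t|) := by gcongr
    have b4 : r ^ 2 ≤ 2 * (C * (u m t - S t) ^ 2 + |p m ^ 2 - a ^ 2| * S t ^ 2 +
      S t ^ 2 * |u m t - S t|) := by linarith
    have b5 : (q - k * r) ^ 2 ≤ 2 * q ^ 2 + 2 * k ^ 2 * r ^ 2 := by
      nlinarith [sq_nonneg (q + k * r)]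
    rw [e1]
    nlinarith [sq_nonneg k]
  have hR0 : ∀ t, 0 ≤ C * (u m t - S t) ^ 2 + |p m ^ 2 - a ^ 2| * S t ^ 2 +
    |S t ^ 2| * |u m t - S t| := by
    intro t
    have : 0 ≤ C := (by linarith [hM m t] : 0 ≤ p m ^ 2 - u m t).trans (hC m t)
    positivity
  calc _ ≤ ∫ t in Ioi 0, (2 * (v m t + k * (u m t * √(p m ^ 2 - u m t))) ^ 2 + 4 * k ^ 2 *
      (C * (u m t - S t) ^ 2 + |p m ^ 2 - a ^ 2| * S t ^ 2 + |S t ^ 2| * |u m t - S t|)) := by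
        apply integral_mono_of_nonneg (Eventually.of_forall fun t => sq_nonneg _)
          ((i1.const_mul 2).add (iR.const_mul _)).integrableOn (Eventually.of_forall hpt)
    _ = 2 * (∫ t in Ioi 0, (v m t + k * (u m t * √(p m ^ 2 - u m t))) ^ 2) + 4 * k ^ 2 *
      ∫ t in Ioi 0, (C * (u m t - S t) ^ 2 + |p m ^ 2 - a ^ 2| * S t ^ 2 +
        |S t ^ 2| * |u m t - S t|) := by
        rw [integral_add (i1.const_mul 2).integrableOn (iR.const_mul _).integrableOn,
          integral_const_mul, integral_const_mul]
    _ ≤ 2 * (∫ t in Ioi 0, (v m t + k * (u m t * √(p m ^ 2 - u m t))) ^ 2) + 4 * k ^ 2 *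
      ∫ t, (C * (u m t - S t) ^ 2 + |p m ^ 2 - a ^ 2| * S t ^ 2 +
        |S t ^ 2| * |u m t - S t|) := by
        refine add_le_add le_rfl (mul_le_mul_of_nonneg_left ?_ (by positivity))
        exact setIntegral_le_integral iR (Eventually.of_forall hR0)
    _ ≤ _ := by
        refine add_le_add le_rfl (mul_le_mul_of_nonneg_left ?_ (by positivity))
        rw [integral_add (f := fun t => C * (u m t - S t) ^ 2 + |p m ^ 2 - a ^ 2| * S t ^ 2)
          ((i2.const_mul C).add (hiS.const_mul _)) i3,
          integral_add (i2.const_mul C) (hiS.const_mul _), integral_const_mul, integral_const_mul]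
        exact add_le_add le_rfl (cs_int hSS md)

theorem core {k a : ℝ} (hk : 0 < k) (ha : 0 < a) {u v : ℕ → ℝ → ℝ} {p : ℕ → ℝ}
    (hg : ∀ m, Good (u m) (v m)) (hM : ∀ m t, u m t ≤ p m ^ 2)
    (h0 : ∀ m, u m 0 = p m ^ 2) (hp0 : ∀ m, 0 ≤ p m)
    (hmass : ∀ m, ∫ t, u m t ^ 2 = (8 / 3) * a ^ 3 / k)
    (hE : Tendsto (fun m => ∫ t, (v m t ^ 2 - k ^ 2 * u m t ^ 3)) atTop
      (𝓝 (-(8 / 5) * k * a ^ 5))) :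
    Tendsto (fun m => ∫ t, (u m t - a ^ 2 * sech (k * a / 2 * t) ^ 2) ^ 2) atTop (𝓝 0) ∧
    Tendsto (fun m => ∫ t, (v m t - (-(k * a) * (a ^ 2 * sech (k * a / 2 * t) ^ 2) *
      Real.tanh (k * a / 2 * t))) ^ 2) atTop (𝓝 0) := by
  set S : ℝ → ℝ := fun t => a ^ 2 * sech (k * a / 2 * t) ^ 2 with hS
  have hka : 0 < k * a / 2 := by positivity
  have hcs := continuous_sech
  have hSc : Continuous S := by fun_prop
  have hS0 : ∀ t, 0 ≤ S t := fun t => by positivity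
  have hSa : ∀ t, S t ≤ a ^ 2 := by
    intro t
    have := pow_le_one₀ (n := 2) (sech_pos (k * a / 2 * t)).le (sech_le_one _)
    simp only [hS]; nlinarith [sq_nonneg a]
  have hSi : Integrable S := (integrable_sech_sq.comp_mul_left' hka.ne').const_mul _
  have e4 : ∀ t, S t ^ 2 = a ^ 4 * sech (k * a / 2 * t) ^ 4 := fun t => by simp only [hS]; ring
  have hS2 : MemLp S 2 := by
    rw [memLp_two_iff_integrable_sq hSc.aestronglyMeasurable]
    simp only [e4]
    exact (integrable_sech_four.comp_mul_left' hka.ne').const_mul _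
  have hSm : ∫ t, S t ^ 2 = (8 / 3) * a ^ 3 / k := by
    simp only [e4]
    rw [integral_const_mul, Measure.integral_comp_mul_left (fun x => sech x ^ 4),
      integral_sech_four, abs_of_pos (by positivity), smul_eq_mul]
    field_simp
    norm_num
  -- deficits
  set Dp : ℕ → ℝ := fun m => ∫ t in Ioi 0, (v m t + k * (u m t * √(p m ^ 2 - u m t))) ^ 2 with hDp
  set Dm : ℕ → ℝ := fun m =>
    ∫ t in Ioi 0, (- v m (-t) + k * (u m (-t) * √(p m ^ 2 - u m (-t)))) ^ 2 with hDm
  have hDp0 : ∀ m, 0 ≤ Dp m := fun m => integral_nonneg fun t => sq_nonneg _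
  have hDm0 : ∀ m, 0 ≤ Dm m := fun m => integral_nonneg fun t => sq_nonneg _
  have hid : ∀ m, Dp m + Dm m + (8 / 15) * k * ((p m - a) ^ 2 *
      (2 * p m ^ 3 + 4 * a * p m ^ 2 + 6 * a ^ 2 * p m + 3 * a ^ 3)) =
      (∫ t, (v m t ^ 2 - k ^ 2 * u m t ^ 3)) - (-(8 / 5) * k * a ^ 5) := by
    intro m
    have := (hg m).full_def (k := k) (hp0 m) (hM m) (h0 m)
    simp only [hDp, hDm]
    rw [this, hmass]
    field_simp
    ring
  have hz : Tendsto (fun m => (∫ t, (v m t ^ 2 - k ^ 2 * u m t ^ 3)) - (-(8 / 5) * k * a ^ 5))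
      atTop (𝓝 0) := by
    have := hE.sub_const (-(8 / 5) * k * a ^ 5)
    rwa [sub_self] at this
  have hrest : ∀ m, 0 ≤ (8 / 15) * k * ((p m - a) ^ 2 *
      (2 * p m ^ 3 + 4 * a * p m ^ 2 + 6 * a ^ 2 * p m + 3 * a ^ 3)) := by
    intro m; have := hp0 m; positivity
  have tDp : Tendsto Dp atTop (𝓝 0) := squeeze_zero hDp0
    (fun m => by linarith [hid m, hDm0 m, hrest m]) hz
  have tDm : Tendsto Dm atTop (𝓝 0) := squeeze_zero hDm0
    (fun m => by linarith [hid m, hDp0 m, hrest m]) hz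
  have tp : Tendsto p atTop (𝓝 a) := by
    have h1 : Tendsto (fun m => (p m - a) ^ 2) atTop (𝓝 0) := by
      have h2 := hz.div_const ((8 / 5) * k * a ^ 3)
      rw [zero_div] at h2
      refine squeeze_zero (fun m => sq_nonneg _) (fun m => ?_) h2
      rw [le_div_iff₀ (by positivity)]
      have h3 : (8 / 15) * k * ((p m - a) ^ 2 * (3 * a ^ 3)) ≤ (8 / 15) * k * ((p m - a) ^ 2 *
        (2 * p m ^ 3 + 4 * a * p m ^ 2 + 6 * a ^ 2 * p m + 3 * a ^ 3)) := by
        have := hp0 m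
        gcongr
        have : 0 ≤ 2 * p m ^ 3 + 4 * a * p m ^ 2 + 6 * a ^ 2 * p m := by positivity
        linarith
      linarith [hid m, hDp0 m, hDm0 m]
    have h2 := h1.sqrt
    simp only [Real.sqrt_sq_eq_abs, Real.sqrt_zero] at h2
    have h3 := (tendsto_zero_iff_abs_tendsto_zero _).2 h2
    simpa using h3.add_const a
  -- uniform bounds
  obtain ⟨P, hP⟩ := (tp.pow 2).bddAbove_range
  have hP : ∀ m, p m ^ 2 ≤ P := fun m => hP ⟨m, rfl⟩
  obtain ⟨E, hEb⟩ := hE.bddAbove_range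
  have hEb : ∀ m, ∫ t, (v m t ^ 2 - k ^ 2 * u m t ^ 3) ≤ E := fun m => hEb ⟨m, rfl⟩
  set μ := (8 / 3) * a ^ 3 / k with hμ
  have hμ0 : 0 < μ := by positivity
  have hv : ∀ m, ∫ t, v m t ^ 2 ≤ E + k ^ 2 * P * μ := by
    intro m
    have g := hg m
    have i1 : Integrable fun t => k ^ 2 * (p m) ^ 2 * u m t ^ 2 := g.isq.const_mul _
    have i2 : Integrable fun t => v m t ^ 2 - k ^ 2 * u m t ^ 3 := by
      have e2 : ∀ t, (u m t * √(p m ^ 2 - u m t))^2 = (u m t ^ 2 * (p m ^ 2 - u m t)) := by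
        intro t
        rw [mul_pow, Real.sq_sqrt (by linarith [hM m t])]
      have j := (g.memF (p m)).integrable_sq
      simp only [e2] at j
      have := (g.isq'.add (j.const_mul (k ^ 2))).sub i1
      refine this.congr (Eventually.of_forall fun x => ?_)
      simp only [Pi.sub_apply, Pi.add_apply]; ring
    calc ∫ t, v m t ^ 2 ≤ ∫ t, ((v m t ^ 2 - k ^ 2 * u m t ^ 3) + k ^ 2 * (p m) ^ 2 * u m t ^ 2) := by
          apply integral_mono g.isq' (i2.add i1)
          intro t
          have h1 : 0 ≤ k ^ 2 * u m t ^ 2 * (p m ^ 2 - u m t) := by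
            have := hM m t
            have : 0 ≤ p m ^ 2 - u m t := by linarith
            positivity
          simp only [Pi.add_apply]
          nlinarith
      _ = (∫ t, (v m t ^ 2 - k ^ 2 * u m t ^ 3)) + k ^ 2 * (p m) ^ 2 * μ := by
          rw [integral_add i2 i1, integral_const_mul, hmass]
      _ ≤ _ := by
          have := hEb m
          have := hP m
          gcongr
  set K := √(μ + (E + k ^ 2 * P * μ)) with hK
  have hKu : ∀ m t, -K ≤ u m t := by
    intro m t
    have h1 := (hg m).bound t
    rw [hmass] at h1
    have h2 := Real.abs_le_sqrt (h1.trans (add_le_add_right (hv m) μ))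
    exact (abs_le.1 h2).1
  -- pointwise lower bounds
  have hSneg : ∀ t, S (-t) = S t := by
    intro t; simp only [hS]; rw [mul_neg, sech_neg]
  have hg' : ∀ m, Good (fun t => u m (-t)) (fun t => - v m (-t)) := fun m => (hg m).reflect
  have hlow : ∀ t, ∀ η > 0, ∀ᶠ m in atTop, S t - η < u m t := by
    intro t η hη
    rcases le_total 0 t with ht | ht
    · exact lower0 hk ha ht hg hM h0 tp tDp η hη
    · have := lower0 hk ha (neg_nonneg.2 ht) hg' (fun m t => hM m _) (fun m => by simpa using h0 m)
        tp tDm η hη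
      filter_upwards [this] with m hm
      rw [neg_neg] at hm
      have h2 := hSneg t
      simp only [hS] at h2 ⊢
      rw [h2] at hm
      exact hm
  have hL2 := l2conv hSc hS0 hSi hS2 (fun m => (hg m).mu) (Real.sqrt_nonneg _) hKu
    (fun m => (hmass m).trans hSm.symm) hlow
  refine ⟨hL2, ?_⟩
  have hL2' : Tendsto (fun m => ∫ t, (u m (-t) - S t) ^ 2) atTop (𝓝 0) := by
    refine hL2.congr fun m => ?_
    rw [← integral_neg_eq_self (fun t => (u m t - S t) ^ 2)]
    simp only [hSneg]
  have hC : ∀ m t, p m ^ 2 - u m t ≤ P + K := fun m t => by linarith [hP m, hKu m t]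
  have r1 := h1half (k := k) hSc hS0 hSa hS2 hg hM tp hC tDp hL2
  have r2 := h1half (k := k) hSc hS0 hSa hS2 hg' (fun m t => hM m _) tp (fun m t => hC m _) tDm hL2'
  set S' : ℝ → ℝ := fun t => -(k * a) * S t * Real.tanh (k * a / 2 * t) with hS'
  have hS'eq : ∀ t, 0 ≤ t → - k * S t * √(a ^ 2 - S t) = S' t := by
    intro t ht
    simp only [hS', hS]
    rw [sech_sqrt (by positivity) (by positivity), Real.sqrt_sq ha.le]
    ring
  have hS'odd : ∀ t, S' (-t) = - S' t := by
    intro t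
    simp only [hS', hSneg]
    rw [mul_neg, Real.tanh_neg]; ring
  have hS'c : Continuous S' := by
    have : Continuous Real.tanh := by
      rw [show Real.tanh = fun x => Real.sinh x / Real.cosh x from
        funext Real.tanh_eq_sinh_div_cosh]
      exact Real.continuous_sinh.div Real.continuous_cosh fun x => (Real.cosh_pos x).ne'
    fun_prop
  have htanh : ∀ x, |Real.tanh x| ≤ 1 := by
    intro x
    rw [Real.tanh_eq_sinh_div_cosh, abs_div, abs_of_pos (Real.cosh_pos x),
      div_le_one (Real.cosh_pos x), abs_le]
    have := Real.sinh_lt_cosh x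
    have h2 := Real.sinh_lt_cosh (-x)
    rw [Real.sinh_neg, Real.cosh_neg] at h2
    constructor <;> linarith
  have hS'2 : MemLp S' 2 := by
    refine MemLp.of_le_mul (c := k * a) hS2 hS'c.aestronglyMeasurable
      (Eventually.of_forall fun t => ?_)
    simp only [hS', norm_mul, Real.norm_eq_abs, abs_neg]
    rw [abs_of_pos (show 0 < k * a by positivity)]
    have := htanh (k * a / 2 * t)
    exact mul_le_of_le_one_right (by positivity) this
  have hsum := r1.add r2
  rw [add_zero] at hsum
  refine hsum.congr fun m => ?_
  have c1 : ∫ t in Ioi 0, (v m t - (- k * S t * √(a ^ 2 - S t))) ^ 2 =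
      ∫ t in Ioi 0, (v m t - S' t) ^ 2 :=
    setIntegral_congr_fun measurableSet_Ioi fun t ht => by
      simp only [hS'eq t (le_of_lt ht)]
  have c2 : ∫ t in Ioi 0, (- v m (-t) - (- k * S t * √(a ^ 2 - S t))) ^ 2 =
      ∫ t in Iic 0, (v m t - S' t) ^ 2 := by
    have := integral_comp_neg_Ioi 0 (fun t => (v m t - S' t) ^ 2)
    rw [neg_zero] at this
    rw [← this]
    refine setIntegral_congr_fun measurableSet_Ioi fun t ht => ?_
    simp only [hS'eq t (le_of_lt ht), hS'odd]
    ring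
  have i0 : Integrable (fun t => (v m t - S' t) ^ 2) := ((hg m).mv.sub hS'2).integrable_sq
  have e5 := integral_add_compl (μ := volume) (s := Iic (0:ℝ)) measurableSet_Iic i0
  rw [compl_Iic] at e5
  rw [c1, c2, add_comm, e5]

lemma consts {c d w αK cK : ℝ} (hc : 0 < c) (hd : 0 < d) (hw : 0 < w)
    (hα : αK = 2 * w ^ (-(1 : ℝ) / 2))
    (hcK : cK = -(9 / 5) * (2 / 3 : ℝ) ^ ((1 : ℝ) / 3) * d ^ ((4 : ℝ) / 3) /
      (c ^ ((1 : ℝ) / 3) * w ^ ((5 : ℝ) / 6))) :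
    ∃ k a : ℝ, 0 < k ∧ 0 < a ∧ c * k ^ 2 = d ∧ 2 * αK = (8 / 3) * a ^ 3 / k ∧
      cK = (c / 2) * (-(8 / 5) * k * a ^ 5) ∧
      -Real.sqrt 3 * (3 / 16 : ℝ) ^ ((1 : ℝ) / 6) * d ^ ((1 : ℝ) / 3) /
      (c ^ ((1 : ℝ) / 3) * w ^ ((1 : ℝ) / 3)) = - a ^ 2 ∧
      ∀ x, (3 / 16 : ℝ) ^ ((1 : ℝ) / 3) * d ^ ((2 : ℝ) / 3) * x /
        (c ^ ((2 : ℝ) / 3) * w ^ ((1 : ℝ) / 6)) = k * a / 2 * x := by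
  have six : ∀ x : ℝ, 0 ≤ x → ∀ n : ℕ, x ^ ((n : ℝ) / 6) = (x ^ ((1 : ℝ) / 6)) ^ n := by
    intro x hx n
    rw [← Real.rpow_mul_natCast hx]; congr 1; ring
  set D := d ^ ((1 : ℝ) / 6) with hD
  set C := c ^ ((1 : ℝ) / 6) with hC
  set V := w ^ ((1 : ℝ) / 6) with hV
  set q := (3 / 2 : ℝ) ^ ((1 : ℝ) / 3) with hq
  have hD0 : 0 < D := by positivity
  have hC0 : 0 < C := by positivity
  have hV0 : 0 < V := by positivity
  have hq0 : 0 < q := by positivity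
  have hq3 : q ^ 3 = 3 / 2 := by
    rw [hq, ← Real.rpow_mul_natCast (by norm_num)]; norm_num
  have d6 : d = D ^ 6 := by
    rw [hD, ← Real.rpow_mul_natCast hd.le]; norm_num
  have c6 : c = C ^ 6 := by
    rw [hC, ← Real.rpow_mul_natCast hc.le]; norm_num
  have a1 : d ^ ((1 : ℝ) / 3) = D ^ 2 := by rw [← six d hd.le]; norm_num
  have a2 : d ^ ((2 : ℝ) / 3) = D ^ 4 := by rw [← six d hd.le]; norm_num
  have a3 : d ^ ((4 : ℝ) / 3) = D ^ 8 := by rw [← six d hd.le]; norm_num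
  have b1 : c ^ ((1 : ℝ) / 3) = C ^ 2 := by rw [← six c hc.le]; norm_num
  have b2 : c ^ ((2 : ℝ) / 3) = C ^ 4 := by rw [← six c hc.le]; norm_num
  have w1 : w ^ ((1 : ℝ) / 3) = V ^ 2 := by rw [← six w hw.le]; norm_num
  have w2 : w ^ ((5 : ℝ) / 6) = V ^ 5 := by rw [← six w hw.le]; norm_num
  have w3 : w ^ (-(1 : ℝ) / 2) = (V ^ 3)⁻¹ := by
    rw [← six w hw.le, ← Real.rpow_neg hw.le]; norm_num
  have q1 : (2 / 3 : ℝ) ^ ((1 : ℝ) / 3) = q⁻¹ := by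
    rw [hq, ← Real.inv_rpow (by norm_num)]; norm_num
  have q2 : (3 / 16 : ℝ) ^ ((1 : ℝ) / 3) = q / 2 := by
    have : (0:ℝ) ≤ q / 2 := by positivity
    rw [show (3 / 16 : ℝ) = (q / 2) ^ 3 by rw [div_pow, hq3]; norm_num,
      ← Real.rpow_natCast, ← Real.rpow_mul this]
    norm_num
  have q4 : √3 * (3 / 16 : ℝ) ^ ((1 : ℝ) / 6) = q ^ 2 := by
    have h6 : ((3 / 16 : ℝ) ^ ((1 : ℝ) / 6)) ^ 6 = 3 / 16 := by
      rw [← Real.rpow_mul_natCast (by norm_num)]; norm_num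
    refine (pow_left_inj₀ (n := 6) (by positivity) (by positivity) (by norm_num)).1 ?_
    rw [mul_pow, h6, show (√3) ^ 6 = ((√3) ^ 2) ^ 3 by ring, Real.sq_sqrt (by norm_num),
      show (q ^ 2) ^ 6 = (q ^ 3) ^ 4 by ring, hq3]
    norm_num
  refine ⟨D ^ 3 / C ^ 3, q * D / (C * V), by positivity, by positivity, ?_, ?_, ?_, ?_, ?_⟩
  · rw [d6, c6]; field_simp
  · rw [hα, w3]
    field_simp
    rw [hq3]; norm_num
  · rw [hcK, q1, a3, b1, w2, c6]
    field_simp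
    have : q ^ 6 = 9 / 4 := by rw [show q ^ 6 = (q ^ 3) ^ 2 by ring, hq3]; norm_num
    rw [this]; norm_num
  · rw [neg_mul, q4, a1, b1, w1]
    field_simp
  · intro x
    rw [q2, a2, b2]
    field_simp

theorem stmt3 (ν₀ ω β : ℝ) (hν₀ : 0 < ν₀) (hβ : ν₀ ^ 2 / 3 < β)
    (c d αK cK : ℝ) (hc : c = β - ν₀ ^ 2 / 3) (hd : d = ω ^ 2 / 3 + 1)
    (hα : αK = 2 * (ω ^ 2 + 4) ^ (-(1 : ℝ) / 2))
    (hcK : cK = -(9 / 5) * (2 / 3 : ℝ) ^ ((1 : ℝ) / 3) * d ^ ((4 : ℝ) / 3) /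
      (c ^ ((1 : ℝ) / 3) * (ω ^ 2 + 4) ^ ((5 : ℝ) / 6)))
    (φK : ℝ → ℝ)
    (hφK : ∀ x, φK x = -Real.sqrt 3 * (3 / 16 : ℝ) ^ ((1 : ℝ) / 6) * d ^ ((1 : ℝ) / 3) /
      (c ^ ((1 : ℝ) / 3) * (ω ^ 2 + 4) ^ ((1 : ℝ) / 3)) *
      sech ((3 / 16 : ℝ) ^ ((1 : ℝ) / 3) * d ^ ((2 : ℝ) / 3) * x /
        (c ^ ((2 : ℝ) / 3) * (ω ^ 2 + 4) ^ ((1 : ℝ) / 6))) ^ 2)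
    (φ : ℕ → ℝ → ℝ) (φ' : ℕ → ℝ → ℝ)
    (hmem : ∀ m, H1Pair (φ m) (φ' m))
    (hcon : ∀ m, (∫ x : ℝ, (φ m x) ^ 2) = 2 * αK)
    (hmin : Tendsto (fun m => EKdV c d (φ m) (φ' m)) atTop (nhds cK)) :
    ∃ (x : ℕ → ℝ) (mj : ℕ → ℕ) (y : ℝ), StrictMono mj ∧
      Tendsto (fun j =>
        (∫ t : ℝ, (φ (mj j) (t + x (mj j)) - φK (t + y)) ^ 2) +
        ∫ t : ℝ, (φ' (mj j) (t + x (mj j)) - deriv φK (t + y)) ^ 2)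
        atTop (nhds 0) := by
  have hc0 : 0 < c := by rw [hc]; linarith
  have hd0 : 0 < d := by rw [hd]; positivity
  have hw0 : 0 < ω ^ 2 + 4 := by positivity
  obtain ⟨k, a, hk, ha, hkd, hαa, hcKa, hA, hB⟩ := consts hc0 hd0 hw0 hα hcK
  have hφK' : φK = fun x => (-a ^ 2) * sech (k * a / 2 * (x + 0)) ^ 2 := by
    funext x
    rw [hφK, hA, hB, add_zero]
  have hdφK : ∀ x, deriv φK x =
      -(-(k * a) * (a ^ 2 * sech (k * a / 2 * x) ^ 2) * Real.tanh (k * a / 2 * x)) := by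
    intro x
    rw [hφK', (sech_deriv (-a ^ 2) (k * a / 2) 0 x).deriv, add_zero]
    ring
  have hcKneg : cK < 0 := by
    rw [hcKa]
    have : 0 < (c / 2) * ((8 / 5) * k * a ^ 5) := by positivity
    linarith
  have hne : ∀ m, ∫ x, (φ m x) ^ 2 ≠ 0 := by
    intro m
    rw [hcon, hαa]; positivity
  obtain ⟨N, hN⟩ := eventually_atTop.1 (hmin.eventually_lt_const hcKneg)
  -- translations
  have hmax : ∀ m, N ≤ m → ∃ x₀, (∀ t, - φ m t ≤ - φ m x₀) ∧ 0 < - φ m x₀ := by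
    intro m hm
    have g := (hmem m).good (hne m) 0
    simp only [add_zero] at g
    have hpos : ∃ x, 0 < - φ m x := by
      by_contra hcon
      push Not at hcon
      have h1 := hN m hm
      have : 0 ≤ EKdV c d (φ m) (φ' m) := by
        unfold EKdV
        apply mul_nonneg (by norm_num)
        apply integral_nonneg
        intro t
        have : 0 ≤ φ m t := by linarith [hcon t]
        simp only [Pi.zero_apply]
        positivity
      linarith
    obtain ⟨x₀, hx₀⟩ := g.exists_max hpos
    obtain ⟨x₁, hx₁⟩ := hpos
    exact ⟨x₀, hx₀, hx₁.trans_le (hx₀ x₁)⟩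
  choose! X hX1 hX2 using hmax
  have hcore := core hk ha (u := fun n t => - φ (n + N) (t + X (n + N)))
    (v := fun n t => - φ' (n + N) (t + X (n + N))) (p := fun n => √(- φ (n + N) (X (n + N))))
    (fun n => (hmem _).good (hne _) _)
    (fun n t => by
      rw [Real.sq_sqrt (hX2 _ (by omega)).le]
      exact hX1 _ (by omega) _)
    (fun n => by
      rw [Real.sq_sqrt (hX2 _ (by omega)).le]; simp)
    (fun n => Real.sqrt_nonneg _)
    (fun n => by
      rw [integral_add_right_eq_self (fun t => (-φ (n + N) t) ^ 2)]
      simp only [neg_sq]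
      rw [hcon, hαa])
    (by
      have h1 := ((tendsto_add_atTop_iff_nat N).2 hmin).const_mul (2 / c)
      rw [hcKa] at h1
      have h2 : 2 / c * (c / 2 * (-(8 / 5) * k * a ^ 5)) = -(8 / 5) * k * a ^ 5 := by
        field_simp
      rw [h2] at h1
      refine h1.congr fun n => ?_
      rw [integral_add_right_eq_self
        (fun t => (-φ' (n + N) t) ^ 2 - k ^ 2 * (-φ (n + N) t) ^ 3)]
      unfold EKdV
      rw [← mul_assoc, ← integral_const_mul]
      congr 1
      funext t
      rw [← hkd]
      field_simp
      ring)
  refine ⟨X, fun j => j + N, 0, fun i j hij => by simpa using hij, ?_⟩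
  have hsum := hcore.1.add hcore.2
  rw [add_zero] at hsum
  refine hsum.congr fun n => ?_
  congr 1
  · congr 1
    funext t
    rw [hφK']
    simp only [add_zero]
    ring
  · congr 1
    funext t
    rw [add_zero, hdφK]
    ring
end

section
/- If ψ : ℝ → ℂ is twice continuously differentiable, not identically zero, satisfies −(1/4)·g₂·ψ″(x) − 2ν_NLS·ψ(x) + (3/2)·A·|ψ(x)|²·ψ(x) = 0 for every x ∈ ℝ, and ψ(x) → 0 as x → ∞, then there exist θ ∈ [0, 2π) and y ∈ ℝ such that ψ(x) = e^{iθ}·φ_NLS(x + y) for all x ∈ ℝ; conversely, every function e^{iθ}φ_NLS(· + y) is such a solution. In other words, the set of nontrivial decaying solutions is exactly D_NLS = { e^{iθ}φ_NLS(· + y) : θ ∈ [0,2π), y ∈ ℝ }. -/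
open Filter

lemma aux_deriv_tendsto (ψ ψ1 ψ2 : ℝ → ℂ) (h1 : ∀ x, HasDerivAt ψ (ψ1 x) x)
    (h2 : ∀ x, HasDerivAt ψ1 (ψ2 x) x) (t0 : Tendsto ψ atTop (nhds 0))
    (t2 : Tendsto ψ2 atTop (nhds 0)) : Tendsto ψ1 atTop (nhds 0) := by
  rw [Metric.tendsto_atTop] at *
  intro ε hε
  obtain ⟨N0, hN0⟩ := t0 (ε/4) (by positivity)
  obtain ⟨N2, hN2⟩ := t2 (ε/4) (by positivity)
  refine ⟨max N0 N2, fun x hx => ?_⟩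
  have hx0 : N0 ≤ x := le_trans (le_max_left _ _) hx
  have hx2 : N2 ≤ x := le_trans (le_max_right _ _) hx
  have a1 : ∀ t ∈ Set.Icc x (x+1), ‖ψ1 t - ψ1 x‖ ≤ ε/4 := by
    intro t ht
    have := Convex.norm_image_sub_le_of_norm_hasDerivWithin_le (f := ψ1) (f' := ψ2)
      (s := Set.Icc x (x+1)) (C := ε/4) (x := x) (y := t)
      (fun z _ => (h2 z).hasDerivWithinAt)
      (fun z hz => by
        have := hN2 z (le_trans hx2 hz.1)
        rw [dist_zero_right] at this
        exact this.le) (convex_Icc _ _) ⟨le_refl _, by linarith⟩ ht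
    refine this.trans ?_
    have h3 : ‖t - x‖ ≤ 1 := by
      rw [Real.norm_eq_abs, abs_le]; constructor <;> linarith [ht.1, ht.2]
    nlinarith
  have a2 := Convex.norm_image_sub_le_of_norm_hasDerivWithin_le
      (f := fun t : ℝ => ψ t - (t:ℂ) * ψ1 x) (f' := fun t => ψ1 t - 1 * ψ1 x)
      (s := Set.Icc x (x+1)) (C := ε/4) (x := x) (y := x+1)
      (fun z _ => ((h1 z).sub ((HasDerivAt.ofReal_comp (hasDerivAt_id z)).mul_const _)).hasDerivWithinAt)
      (fun z hz => by simpa using a1 z hz) (convex_Icc _ _) ⟨le_refl _, by linarith⟩ ⟨by linarith, le_refl _⟩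
  have b0 := hN0 x hx0
  have b1 := hN0 (x+1) (by linarith)
  rw [dist_zero_right] at *
  have e : ψ1 x = ψ (x+1) - ψ x - (ψ (x + 1) - ((x + 1 : ℝ):ℂ) * ψ1 x - (ψ x - (x:ℂ) * ψ1 x)) := by
    push_cast; ring
  have n1 : ‖x + 1 - x‖ = 1 := by simp
  rw [n1] at a2
  rw [e]
  refine (norm_sub_le _ _).trans_lt ?_
  have := norm_sub_le (ψ (x+1)) (ψ x)
  linarith

lemma aux_forward (k b : ℝ) (hk : 0 < k) (hb : 0 < b) (ψ ψ1 : ℝ → ℂ)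
    (h1 : ∀ x, HasDerivAt ψ (ψ1 x) x)
    (h2 : ∀ x, HasDerivAt ψ1 ((k:ℂ)^2 * ψ x - 2 * (b:ℂ)^2 * (ψ x * star (ψ x)) * ψ x) x)
    (hne : ψ ≠ 0) (t0 : Tendsto ψ atTop (nhds 0)) :
    ∃ θ ∈ Set.Ico (0 : ℝ) (2 * Real.pi), ∃ y : ℝ,
      ∀ x, ψ x = Complex.exp ((θ : ℂ) * Complex.I) * ((k / b * (1 / Real.cosh (k * (x + y))) : ℝ) : ℂ) := by
  have t0s : Tendsto (fun x => star (ψ x)) atTop (nhds 0) := by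
    simpa using t0.star
  have t1 : Tendsto ψ1 atTop (nhds 0) := by
    refine aux_deriv_tendsto ψ ψ1 _ h1 h2 t0 ?_
    have := (t0.const_mul ((k:ℂ)^2)).sub ((((t0.mul t0s).const_mul (2*(b:ℂ)^2))).mul t0)
    simpa using this
  have t1s : Tendsto (fun x => star (ψ1 x)) atTop (nhds 0) := by
    simpa using t1.star
  have h1s : ∀ x, HasDerivAt (fun x => star (ψ x)) (star (ψ1 x)) x := fun x => (h1 x).star
  have h2s : ∀ x, HasDerivAt (fun x => star (ψ1 x))
      ((k:ℂ)^2 * star (ψ x) - 2 * (b:ℂ)^2 * (ψ x * star (ψ x)) * star (ψ x)) x := fun x => by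
    refine HasDerivAt.congr_deriv ((h2 x).star) ?_
    simp only [star_sub, star_mul', star_pow, star_star, Complex.star_def, Complex.conj_ofReal, map_ofNat, Complex.conj_conj]
    ring
  have const0 : ∀ F : ℝ → ℂ, (∀ x, HasDerivAt F 0 x) → Tendsto F atTop (nhds 0) → ∀ x, F x = 0 := by
    intro F hF tF x
    have hc : ∀ y, F y = F x := fun y =>
      is_const_of_deriv_eq_zero (fun z => (hF z).differentiableAt) (fun z => (hF z).deriv) y x
    have : F = fun _ => F x := funext hc
    rw [this] at tF
    exact tendsto_nhds_unique tendsto_const_nhds tF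
  have hL : ∀ x, star (ψ x) * ψ1 x - ψ x * star (ψ1 x) = 0 := by
    refine const0 _ (fun x => ?_) ?_
    · refine HasDerivAt.congr_deriv (((h1s x).mul (h2 x)).sub ((h1 x).mul (h2s x))) ?_
      ring
    · simpa using (t0s.mul t1).sub (t0.mul t1s)
  have hE : ∀ x, ψ1 x * star (ψ1 x) - (k:ℂ)^2 * (ψ x * star (ψ x))
      + (b:ℂ)^2 * ((ψ x * star (ψ x)) * (ψ x * star (ψ x))) = 0 := by
    refine const0 _ (fun x => ?_) ?_
    · have m := (h1 x).mul (h1s x)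
      refine HasDerivAt.congr_deriv ((((h2 x).mul (h2s x)).sub (m.const_mul ((k:ℂ)^2))).add ((m.mul m).const_mul ((b:ℂ)^2))) ?_
      simp only [Pi.mul_apply]
      ring
    · have m := t0.mul t0s
      simpa using ((t1.mul t1s).sub (m.const_mul ((k:ℂ)^2))).add ((m.mul m).const_mul ((b:ℂ)^2))
  have hbound : ∀ x, ‖ψ1 x‖ ≤ k * ‖ψ x‖ := by
    intro x
    have h := hE x
    have e : ∀ z : ℂ, z * star z = ((‖z‖^2 : ℝ) : ℂ) := by
      intro z
      have := Complex.mul_conj' z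
      simpa using this
    rw [e, e] at h
    have h' : ‖ψ1 x‖^2 - k^2 * ‖ψ x‖^2 + b^2 * (‖ψ x‖^2 * ‖ψ x‖^2) = 0 := by exact_mod_cast h
    apply (sq_le_sq₀ (norm_nonneg _) (by positivity)).1
    nlinarith [sq_nonneg (b * (‖ψ x‖^2))]
  have hnz : ∀ x, ψ x ≠ 0 := by
    intro x0 hx0
    apply hne
    have hd : ∀ x, HasDerivAt (fun x => ‖ψ x‖^2) (2 * inner ℝ (ψ x) (ψ1 x)) x := fun x => (h1 x).norm_sq
    have hi : ∀ x, |inner ℝ (ψ x) (ψ1 x)| ≤ k * ‖ψ x‖^2 := fun x => by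
      refine (abs_real_inner_le_norm _ _).trans ?_
      nlinarith [hbound x, norm_nonneg (ψ x)]
    have he : ∀ c x : ℝ, HasDerivAt (fun x => Real.exp (c * x)) (Real.exp (c * x) * c) x := fun c x => by
      simpa using ((hasDerivAt_id x).const_mul c).exp
    have hm : Monotone (fun x => ‖ψ x‖^2 * Real.exp ((2*k) * x)) := by
      refine monotone_of_deriv_nonneg (fun x => ((hd x).mul (he _ x)).differentiableAt) (fun x => ?_)
      have := ((hd x).mul (he (2*k) x)).deriv
      refine le_of_le_of_eq ?_ this.symm
      have := (abs_le.1 (hi x)).1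
      have : 0 ≤ (2 * inner ℝ (ψ x) (ψ1 x) + 2 * k * ‖ψ x‖^2) * Real.exp (2 * k * x) :=
        mul_nonneg (by linarith) (Real.exp_pos _).le
      linarith
    have ha : Antitone (fun x => ‖ψ x‖^2 * Real.exp ((-(2*k)) * x)) := by
      refine antitone_of_deriv_nonpos (fun x => ((hd x).mul (he _ x)).differentiableAt) (fun x => ?_)
      have := ((hd x).mul (he (-(2*k)) x)).deriv
      refine le_of_eq_of_le this ?_
      have := (abs_le.1 (hi x)).2
      have : 0 ≤ (2 * k * ‖ψ x‖^2 - 2 * inner ℝ (ψ x) (ψ1 x)) * Real.exp (-(2 * k) * x) :=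
        mul_nonneg (by linarith) (Real.exp_pos _).le
      linarith
    funext x
    have fin : ∀ c : ℝ, ‖ψ x‖^2 * Real.exp (c * x) ≤ ‖ψ x0‖^2 * Real.exp (c * x0) → ψ x = 0 := by
      intro c h
      rw [hx0] at h
      simp only [norm_zero] at h
      have : ‖ψ x‖^2 ≤ 0 := by
        by_contra hh
        have := mul_pos (not_le.1 hh) (Real.exp_pos (c*x))
        linarith
      have : ‖ψ x‖ = 0 := by nlinarith [norm_nonneg (ψ x)]
      simpa using this
    rcases le_total x x0 with h | h
    · exact fin _ (hm h)
    · exact fin _ (ha h)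
  have hsz : ∀ x, star (ψ x) ≠ 0 := fun x => star_ne_zero.2 (hnz x)
  have hsq : ∀ x, ψ1 x ^ 2 = (k:ℂ)^2 * ψ x ^ 2 - (b:ℂ)^2 * ψ x ^ 3 * star (ψ x) := by
    intro x
    apply mul_right_cancel₀ (hsz x)
    linear_combination ψ x * hE x + ψ1 x * hL x
  -- w = 1/ψ
  have hw : ∀ x, HasDerivAt (fun x => (ψ x)⁻¹) (-ψ1 x / ψ x ^ 2) x := fun x => (h1 x).inv (hnz x)
  have hw1 : ∀ x, HasDerivAt (fun x => -ψ1 x / ψ x ^ 2) ((k:ℂ)^2 * (ψ x)⁻¹) x := fun x => by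
    refine HasDerivAt.congr_deriv ((h2 x).neg.div ((h1 x).pow 2) (pow_ne_zero 2 (hnz x))) ?_
    have := hnz x
    try simp only [Pi.neg_apply, Pi.pow_apply]
    field_simp
    linear_combination 2 * ψ x * hsq x
  have hexp : ∀ (c : ℝ) x, HasDerivAt (fun x : ℝ => ((Real.exp (c * x) : ℝ) : ℂ)) ((Real.exp (c * x) * c : ℝ) : ℂ) x := fun c x => by
    apply HasDerivAt.ofReal_comp
    simpa using ((hasDerivAt_id x).const_mul c).exp
  have constc : ∀ F : ℝ → ℂ, (∀ x, HasDerivAt F 0 x) → ∀ x, F x = F 0 := fun F hF x =>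
      is_const_of_deriv_eq_zero (fun z => (hF z).differentiableAt) (fun z => (hF z).deriv) x 0
  have hP := constc (fun x => (-ψ1 x / ψ x ^ 2 + (k:ℂ) * (ψ x)⁻¹) * ((Real.exp (-k * x) : ℝ) : ℂ)) (fun x => by
    refine HasDerivAt.congr_deriv (((hw1 x).add ((hw x).const_mul (k:ℂ))).mul (hexp (-k) x)) ?_
    simp only [Pi.add_apply]
    push_cast
    ring)
  have hQ := constc (fun x => ((k:ℂ) * (ψ x)⁻¹ - -ψ1 x / ψ x ^ 2) * ((Real.exp (k * x) : ℝ) : ℂ)) (fun x => by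
    refine HasDerivAt.congr_deriv ((((hw x).const_mul (k:ℂ)).sub (hw1 x)).mul (hexp k x)) ?_
    simp only [Pi.sub_apply]
    push_cast
    ring)
  simp only [mul_zero, Real.exp_zero, Complex.ofReal_one, mul_one] at hP hQ
  set P := -ψ1 0 / ψ 0 ^ 2 + (k:ℂ) * (ψ 0)⁻¹ with hPdef
  set Q := (k:ℂ) * (ψ 0)⁻¹ - -ψ1 0 / ψ 0 ^ 2 with hQdef
  have hPQ : star P * Q = (b:ℂ)^2 := by
    have z := hnz 0
    have sz := hsz 0
    have e : star P = -star (ψ1 0) / star (ψ 0) ^ 2 + (k:ℂ) * (star (ψ 0))⁻¹ := by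
      simp [hPdef]
    rw [e, hQdef]
    field_simp
    linear_combination -hE 0 + (k:ℂ) * hL 0
  have hbc : (b:ℂ) ≠ 0 := by exact_mod_cast hb.ne'
  have hkc : (k:ℂ) ≠ 0 := by exact_mod_cast hk.ne'
  have hP0 : P ≠ 0 := by
    intro h
    rw [h] at hPQ
    simp only [star_zero, zero_mul] at hPQ
    exact pow_ne_zero 2 hbc hPQ.symm
  set r := ‖P‖ with hr
  have hrpos : 0 < r := norm_pos_iff.2 hP0
  have hrc : (r:ℂ) ≠ 0 := by exact_mod_cast hrpos.ne'
  obtain ⟨θ, hθ, hPθ⟩ : ∃ θ ∈ Set.Ico (0:ℝ) (2*Real.pi), P * Complex.exp (θ * Complex.I) = r := by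
    refine ⟨toIcoMod Real.two_pi_pos 0 (-P.arg), by simpa using toIcoMod_mem_Ico Real.two_pi_pos 0 (-P.arg), ?_⟩
    have h := self_sub_toIcoDiv_zsmul Real.two_pi_pos 0 (-P.arg)
    rw [← h]
    have e1 : (((-P.arg - toIcoDiv Real.two_pi_pos 0 (-P.arg) • (2*Real.pi) : ℝ)) : ℂ) * Complex.I
        = -(P.arg * Complex.I) - (toIcoDiv Real.two_pi_pos 0 (-P.arg) : ℤ) * (2 * Real.pi * Complex.I) := by
      push_cast [zsmul_eq_mul]; ring
    rw [e1, Complex.exp_sub, Complex.exp_int_mul_two_pi_mul_I, Complex.exp_neg, div_one]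
    have := Complex.norm_mul_exp_arg_mul_I P
    rw [← hr] at this
    rw [mul_inv_eq_iff_eq_mul₀ (Complex.exp_ne_zero _), this]
  have hQθ : Q * Complex.exp (θ * Complex.I) = (b:ℂ)^2 / r := by
    have hsP : star P ≠ 0 := star_ne_zero.2 hP0
    have e : P * star P = (r:ℂ)^2 := by
      have := Complex.mul_conj' P
      simpa using this
    rw [eq_div_iff hrc]
    apply mul_left_cancel₀ hsP
    apply mul_left_cancel₀ hP0
    linear_combination (P * Complex.exp (θ * Complex.I) * r) * hPQ + (b:ℂ)^2 * r * hPθ - (b:ℂ)^2 * e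
  refine ⟨θ, hθ, Real.log (r / b) / k, fun x => ?_⟩
  have hx1 := hP x
  have hx2 := hQ x
  have ec : k * (x + Real.log (r/b) / k) = k * x + Real.log (r/b) := by field_simp
  rw [ec, Real.cosh_eq, neg_add, Real.exp_add, Real.exp_add, Real.exp_neg (Real.log _), Real.exp_log (by positivity)]
  have eneg : Real.exp (-k * x) = (Real.exp (k*x))⁻¹ := by rw [neg_mul, Real.exp_neg]
  rw [eneg] at hx1
  rw [← neg_mul, eneg]
  have hXp := Real.exp_pos (k*x)
  generalize Real.exp (k*x) = X at *
  have hXc : (X:ℂ) ≠ 0 := by exact_mod_cast hXp.ne'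
  push_cast at *
  have z := hnz x
  have key : 2 * (k:ℂ) * Complex.exp (θ * Complex.I) = ψ x * (r * X + (b:ℂ)^2 / r * (X:ℂ)⁻¹) := by
    rw [← hQθ, ← hPθ, ← hx1, ← hx2]
    field_simp
    ring
  have hD : ((X:ℂ) * (r / b) + (X:ℂ)⁻¹ * (r/b:ℂ)⁻¹) ≠ 0 := by
    have : 0 < X * (r/b) + X⁻¹ * (r/b)⁻¹ := by positivity
    exact_mod_cast this.ne'
  have hD2 : ((X:ℂ) * (r / b) + (X:ℂ)⁻¹ * (r/b:ℂ)⁻¹) * b = r * X + (b:ℂ)^2 / r * (X:ℂ)⁻¹ := by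
    field_simp
  rw [← hD2] at key
  generalize ((X:ℂ) * (r / b) + (X:ℂ)⁻¹ * (r/b:ℂ)⁻¹) = D at *
  field_simp
  linear_combination -key

lemma aux_conv (k b : ℝ) (hb : 0 < b) (hk : 0 < k) (e : ℂ) (he : ‖e‖ = 1) (y : ℝ) (ψ : ℝ → ℂ)
    (hψ : ψ = fun x => e * ((k / b * (1 / Real.cosh (k * (x + y))) : ℝ) : ℂ)) :
    ContDiff ℝ 2 ψ ∧ ψ ≠ 0 ∧
    (∀ x, deriv (deriv ψ) x = (k:ℂ)^2 * ψ x - 2 * (b:ℂ)^2 * ((‖ψ x‖^2 : ℝ) : ℂ) * ψ x) ∧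
    Tendsto ψ atTop (nhds 0) := by
  have cne : ∀ z, Real.cosh z ≠ 0 := fun z => (Real.cosh_pos z).ne'
  have hl : ∀ x, HasDerivAt (fun x => k * (x + y)) k x := fun x => by
    simpa using ((hasDerivAt_id x).add_const y).const_mul k
  have hc : ∀ x, HasDerivAt (fun x => Real.cosh (k * (x + y))) (Real.sinh (k*(x+y)) * k) x := fun x => (hl x).cosh
  have hs : ∀ x, HasDerivAt (fun x => Real.sinh (k * (x + y))) (Real.cosh (k*(x+y)) * k) x := fun x => (hl x).sinh
  have d1 : ∀ x, HasDerivAt ψ (e * ((k / b * (-(Real.sinh (k*(x+y)) * k) / Real.cosh (k*(x+y))^2) : ℝ) : ℂ)) x := fun x => by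
    rw [hψ]
    simp only [one_div]
    exact (((hc x).inv (cne _)).const_mul (k/b)).ofReal_comp.const_mul e
  have d2 : ∀ x, deriv (deriv ψ) x = e * ((k / b * (k^2 / Real.cosh (k*(x+y)) - 2 * k^2 / Real.cosh (k*(x+y))^3) : ℝ) : ℂ) := fun x => by
    have : deriv ψ = _ := funext fun x => (d1 x).deriv
    rw [this]
    refine HasDerivAt.deriv ?_
    refine HasDerivAt.const_mul e (HasDerivAt.ofReal_comp (HasDerivAt.const_mul (k/b) ?_))
    refine HasDerivAt.congr_deriv (((hs x).mul_const k).neg.div ((hc x).pow 2) (pow_ne_zero 2 (cne _))) ?_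
    have := cne (k*(x+y))
    have h := Real.cosh_sq (k*(x+y))
    try simp only [Pi.neg_apply, Pi.pow_apply]
    field_simp
    rw [Real.sinh_sq]
    ring
  refine ⟨?_, ?_, ?_, ?_⟩
  · rw [hψ]
    refine contDiff_const.mul (Complex.ofRealCLM.contDiff.comp ?_)
    refine contDiff_const.mul (contDiff_const.div ?_ (fun x => cne _))
    exact Real.contDiff_cosh.comp (contDiff_const.mul (contDiff_id.add contDiff_const))
  · intro h
    have := congrFun h 0
    rw [hψ] at this
    have h2 := congrArg norm this
    have h3 : k / b * (1 / Real.cosh (k * (0 + y))) ≠ 0 := by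
      have := cne (k * (0 + y))
      positivity
    simp only [norm_mul, he, one_mul, Complex.norm_real, Pi.zero_apply, norm_zero] at h2
    rw [← norm_mul, norm_eq_zero] at h2
    exact h3 h2
  · intro x
    rw [d2]
    have hn : ‖ψ x‖^2 = (k / b * (1 / Real.cosh (k * (x + y))))^2 := by
      rw [hψ]
      dsimp only
      rw [norm_mul, he, one_mul, Complex.norm_real, Real.norm_eq_abs, sq_abs]
    rw [hn, congrFun hψ x]
    have hcc := cne (k*(x+y))
    generalize Real.cosh (k*(x+y)) = C at *
    have hCc : (C:ℂ) ≠ 0 := by exact_mod_cast hcc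
    have hbc : (b:ℂ) ≠ 0 := by exact_mod_cast hb.ne'
    push_cast
    field_simp
  · rw [hψ]
    have h1 : Tendsto (fun x => k * (x + y)) atTop atTop :=
      (tendsto_atTop_add_const_right _ y tendsto_id).const_mul_atTop hk
    have h2 : Tendsto (fun x => Real.cosh (k * (x + y))) atTop atTop := by
      refine tendsto_atTop_mono (fun x => ?_) h1
      have h4 := Real.cosh_sq (k*(x+y))
      have h5 := Real.cosh_pos (k*(x+y))
      rcases le_total 0 (k*(x+y)) with h | h
      · have := Real.self_le_sinh_iff.2 h
        nlinarith
      · linarith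
    have h3 := h2.inv_tendsto_atTop.const_mul (k/b)
    have h4 := ((Complex.continuous_ofReal.tendsto _).comp h3).const_mul e
    simpa [Function.comp_def] using h4

theorem stmt6 (g₂ A α : ℝ) (hg₂ : 0 < g₂) (hA : A < 0) (hα : 0 < α)
    (νNLS : ℝ) (hν : νNLS = -9 * α ^ 2 * A ^ 2 / (8 * g₂))
    (φN : ℝ → ℝ)
    (hφN : ∀ x, φN x = α * Real.sqrt (-3 * A / g₂) * sech (-3 * α * A * x / g₂)) :
    ∀ ψ : ℝ → ℂ,
      (ContDiff ℝ 2 ψ ∧ ψ ≠ 0 ∧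
        (∀ x : ℝ, -(1 / 4 : ℂ) * (g₂ : ℂ) * deriv (deriv ψ) x - 2 * (νNLS : ℂ) * ψ x +
          (3 / 2 : ℂ) * (A : ℂ) * ((‖ψ x‖ ^ 2 : ℝ) : ℂ) * ψ x = 0) ∧
        Tendsto ψ atTop (nhds 0))
      ↔ ∃ θ ∈ Set.Ico (0 : ℝ) (2 * Real.pi), ∃ y : ℝ,
          ψ = fun x => Complex.exp ((θ : ℂ) * Complex.I) * ((φN (x + y) : ℝ) : ℂ) := by
  intro ψ
  have hq : 0 < -3 * A / g₂ := div_pos (by linarith) hg₂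
  obtain ⟨b, hbdef⟩ : ∃ b, b = Real.sqrt (-3 * A / g₂) := ⟨_, rfl⟩
  have hb : 0 < b := hbdef ▸ Real.sqrt_pos.2 hq
  have hb2 : b^2 = -3 * A / g₂ := by rw [hbdef]; exact Real.sq_sqrt hq.le
  have hAb : A = -(b^2 * g₂ / 3) := by rw [hb2]; field_simp
  obtain ⟨k, hkdef⟩ : ∃ k, k = α * b^2 := ⟨_, rfl⟩
  have hk : 0 < k := by rw [hkdef]; positivity
  have hφ : ∀ x, φN x = k / b * (1 / Real.cosh (k * x)) := by
    intro x
    rw [hφN, ← hbdef, sech]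
    have e1 : α * b = k / b := by rw [hkdef]; field_simp
    have e2 : -3 * α * A * x / g₂ = k * x := by rw [hkdef, hb2]; field_simp
    rw [e1, e2]
  have hν' : νNLS = -(k^2 * g₂ / 8) := by
    rw [hν, hkdef, hAb]; field_simp; norm_num
  have hgc : (g₂:ℂ) ≠ 0 := by exact_mod_cast hg₂.ne'
  have hode : ∀ d n z : ℂ, (-(1 / 4 : ℂ) * (g₂ : ℂ) * d - 2 * (νNLS : ℂ) * z +
          (3 / 2 : ℂ) * (A : ℂ) * n * z = 0) ↔ d = (k:ℂ)^2 * z - 2 * (b:ℂ)^2 * n * z := by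
    intro d n z
    rw [hν', hAb]
    push_cast
    constructor
    · intro h
      apply mul_left_cancel₀ hgc
      linear_combination (-4) * h
    · rintro rfl
      ring
  simp only [hode, hφ]
  constructor
  · rintro ⟨hcd, hne, hde, ht⟩
    have h1 : ∀ x, HasDerivAt ψ (deriv ψ x) x := fun x =>
      (hcd.differentiable (by norm_num) x).hasDerivAt
    have hcd1 : ContDiff ℝ 1 (deriv ψ) := by
      have : ContDiff ℝ (1+1) ψ := by simpa [one_add_one_eq_two] using hcd
      exact (contDiff_succ_iff_deriv.1 this).2.2
    have h2 : ∀ x, HasDerivAt (deriv ψ) ((k:ℂ)^2 * ψ x - 2 * (b:ℂ)^2 * (ψ x * star (ψ x)) * ψ x) x := fun x => by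
      have h := (hcd1.differentiable (by norm_num) x).hasDerivAt
      rw [hde x] at h
      have e : ψ x * star (ψ x) = ((‖ψ x‖^2 : ℝ) : ℂ) := by
        simpa using Complex.mul_conj' (ψ x)
      rw [e]
      exact h
    obtain ⟨θ, hθ, y, h⟩ := aux_forward k b hk hb ψ (deriv ψ) h1 h2 hne ht
    exact ⟨θ, hθ, y, funext h⟩
  · rintro ⟨θ, hθ, y, h⟩
    exact aux_conv k b hb hk _ (Complex.norm_exp_ofReal_mul_I θ) y ψ h
end
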